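/- arXiv:math/9803047 — 6 statements merged into one kernel-verified Lean document; each statement's English description precedes it below -/
import Mathlib

section
/- For all positive integers r and k with r ≥ k - 1, the rational number r²/k is an accumulation point of S, i.e., for every ε > 0 there exists s ∈ S with s ≠ r²/k and |s - r²/k| < ε. -/
open Matrix

structure ResolutionDatum (r : ℕ) where
  M : Matrix (Fin r) (Fin r) ℤ
  p : Fin r → ℕ
  symm : M.IsSymm
  negdef : ∀ x : Fin r → ℝ, x ≠ 0 → x ⬝ᵥ ((M.map (Int.cast : ℤ → ℝ)) *ᵥ x) < 0
  offdiag_nonneg : ∀ i j : Fin r, i ≠ j → 0 ≤ M i j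
  diag_le_neg_two : ∀ i : Fin r, p i = 0 → M i i ≤ -2
  connected : (SimpleGraph.fromRel (fun i j : Fin r => 0 < M i j)).Connected

/-- The vector `c i = 2 p i - 2 - M i i` (the values `K · A_i`). -/
def ResolutionDatum.c {r : ℕ} (D : ResolutionDatum r) : Fin r → ℚ :=
  fun i => 2 * (D.p i : ℚ) - 2 - (D.M i i : ℚ)

/-- `-K² = -cᵀ M⁻¹ c`. -/
noncomputable def ResolutionDatum.negK2 {r : ℕ} (D : ResolutionDatum r) : ℚ :=
  - (D.c ⬝ᵥ ((D.M.map (Int.cast : ℤ → ℚ))⁻¹ *ᵥ D.c))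

/-- The set of all values `-K²` of normal surface singularities. -/
def negK2Set : Set ℝ :=
  { x : ℝ | ∃ (r : ℕ) (_ : 0 < r) (D : ResolutionDatum r), x = (D.negK2 : ℝ) }

/-!
Take the star-shaped dual graph with `m = r + 2 - k` legs, each a chain of `n` rational
`(-2)`-curves, attached to a rational central curve of self-intersection `-(r + 2)`. Solving the
adjunction equations gives a numerical cycle `-K` which is linear along every leg, and
`-K² = r² / (k + m / (n + 1))`; this tends to `r² / k` as the legs grow. The same cycle `z = -K`
proves negative definiteness: it is positive and `M z ≤ 0`, so writing a vector as `z * u` turns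
the intersection form into minus a sum of squares.
-/

open Filter Topology

section DirichletForm

theorem eq_of_connected_of_forall_adj {V α : Type*} {G : SimpleGraph V} (hG : G.Connected)
    {u : V → α} (hu : ∀ v w, G.Adj v w → u v = u w) (v w : V) : u v = u w := by
  obtain ⟨walk⟩ := hG.preconnected v w
  induction walk with
  | nil => rfl
  | cons hadj _ ih => exact (hu _ _ hadj).trans ih

variable {V 𝕜 : Type*} [CommRing 𝕜] [LinearOrder 𝕜] [IsStrictOrderedRing 𝕜] {w : V → V → 𝕜}

theorem mul_sub_sq_nonneg (hw : ∀ i j, i ≠ j → 0 ≤ w i j) (u : V → 𝕜) (i j : V) :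
    0 ≤ w i j * (u i - u j) ^ 2 := by
  rcases eq_or_ne i j with rfl | hij
  · simp
  · exact mul_nonneg (hw i j hij) (sq_nonneg _)

variable [Fintype V]

theorem sum_mul_sub_sq_nonneg (hw : ∀ i j, i ≠ j → 0 ≤ w i j) (u : V → 𝕜) :
    0 ≤ ∑ i, ∑ j, w i j * (u i - u j) ^ 2 :=
  Finset.sum_nonneg fun i _ => Finset.sum_nonneg fun j _ => mul_sub_sq_nonneg hw u i j

theorem eq_of_sum_mul_sub_sq_eq_zero {G : SimpleGraph V} (hG : G.Connected)
    (hw : ∀ i j, i ≠ j → 0 ≤ w i j) (hadj : ∀ i j, G.Adj i j → 0 < w i j) {u : V → 𝕜}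
    (hsum : ∑ i, ∑ j, w i j * (u i - u j) ^ 2 = 0) (i j : V) : u i = u j := by
  refine eq_of_connected_of_forall_adj hG (fun i j hij => ?_) i j
  have hrow := (Finset.sum_eq_zero_iff_of_nonneg fun i _ => Finset.sum_nonneg fun j _ =>
    mul_sub_sq_nonneg hw u i j).1 hsum i (Finset.mem_univ i)
  have hterm := (Finset.sum_eq_zero_iff_of_nonneg fun j _ => mul_sub_sq_nonneg hw u i j).1
    hrow j (Finset.mem_univ j)
  simpa [(hadj i j hij).ne', sub_eq_zero] using hterm

end DirichletForm

section GroundState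

variable {V 𝕜 : Type*} [Fintype V]

theorem two_mul_dotProduct_mulVec_mul [CommRing 𝕜] {A : Matrix V V 𝕜} (hA : A.IsSymm)
    (z u : V → 𝕜) :
    2 * ((z * u) ⬝ᵥ (A *ᵥ (z * u))) =
      2 * ∑ i, z i * (A *ᵥ z) i * u i ^ 2 -
        ∑ i, ∑ j, A i j * (z i * z j) * (u i - u j) ^ 2 := by
  have hswap : ∑ i, ∑ j, A i j * (z i * z j) * u j ^ 2 =
      ∑ i, ∑ j, A i j * (z i * z j) * u i ^ 2 := by
    rw [Finset.sum_comm]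
    refine Finset.sum_congr rfl fun i _ => Finset.sum_congr rfl fun j _ => ?_
    rw [hA.apply, mul_comm (z j)]
  have hdiag : ∑ i, z i * (A *ᵥ z) i * u i ^ 2 =
      ∑ i, ∑ j, A i j * (z i * z j) * u i ^ 2 := by
    simp only [mulVec, dotProduct, Finset.mul_sum, Finset.sum_mul]
    exact Finset.sum_congr rfl fun i _ => Finset.sum_congr rfl fun j _ => by ring
  have hcross : (z * u) ⬝ᵥ (A *ᵥ (z * u)) =
      ∑ i, ∑ j, A i j * (z i * z j) * (u i * u j) := by
    simp only [mulVec, dotProduct, Pi.mul_apply, Finset.mul_sum]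
    exact Finset.sum_congr rfl fun i _ => Finset.sum_congr rfl fun j _ => by ring
  have hsquare : ∑ i, ∑ j, A i j * (z i * z j) * (u i - u j) ^ 2 =
      ∑ i, ∑ j, A i j * (z i * z j) * u i ^ 2 + ∑ i, ∑ j, A i j * (z i * z j) * u j ^ 2 -
        2 * ∑ i, ∑ j, A i j * (z i * z j) * (u i * u j) := by
    simp only [Finset.mul_sum, ← Finset.sum_add_distrib, ← Finset.sum_sub_distrib]
    exact Finset.sum_congr rfl fun i _ => Finset.sum_congr rfl fun j _ => by ring
  rw [hsquare, hswap, hdiag, hcross]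
  ring

theorem dotProduct_mulVec_neg_of_exists_pos_mulVec_nonpos
    [Field 𝕜] [LinearOrder 𝕜] [IsStrictOrderedRing 𝕜] {A : Matrix V V 𝕜} {G : SimpleGraph V}
    (hA : A.IsSymm) (hoff : ∀ i j, i ≠ j → 0 ≤ A i j) (hG : G.Connected)
    (hadj : ∀ i j, G.Adj i j → 0 < A i j) {z : V → 𝕜} (hz : ∀ i, 0 < z i)
    (hAz : ∀ i, (A *ᵥ z) i ≤ 0) (hlt : ∃ i, (A *ᵥ z) i < 0) {x : V → 𝕜} (hx : x ≠ 0) :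
    x ⬝ᵥ (A *ᵥ x) < 0 := by
  obtain ⟨u, rfl⟩ : ∃ u, x = z * u :=
    ⟨x / z, funext fun i => (mul_div_cancel₀ (x i) (hz i).ne').symm⟩
  have hzz (i j : V) : 0 < z i * z j := mul_pos (hz i) (hz j)
  have hweight (i j : V) (hij : i ≠ j) : 0 ≤ A i j * (z i * z j) :=
    mul_nonneg (hoff i j hij) (hzz i j).le
  have hdiag (i : V) : z i * (A *ᵥ z) i * u i ^ 2 ≤ 0 :=
    mul_nonpos_of_nonpos_of_nonneg (mul_nonpos_of_nonneg_of_nonpos (hz i).le (hAz i))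
      (sq_nonneg _)
  have hidentity := two_mul_dotProduct_mulVec_mul hA z u
  have hdiag_sum : ∑ i, z i * (A *ᵥ z) i * u i ^ 2 ≤ 0 := Finset.sum_nonpos fun i _ => hdiag i
  have hsquare_sum := sum_mul_sub_sq_nonneg hweight u
  by_contra! hnonneg
  have hconst := eq_of_sum_mul_sub_sq_eq_zero hG hweight
    (fun i j hij => mul_pos (hadj i j hij) (hzz i j)) (u := u) (by linarith)
  obtain ⟨v, hv⟩ := hlt
  have huv : u v = 0 := by
    have hterm := (Finset.sum_eq_zero_iff_of_nonpos fun i _ => hdiag i).1 (by linarith) v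
      (Finset.mem_univ v)
    simpa [(hz v).ne', hv.ne] using hterm
  exact hx (funext fun i => by simp [hconst i v, huv])

end GroundState

namespace ResolutionDatum

variable {n : ℕ}

theorem isUnit_det (D : ResolutionDatum n) : IsUnit (D.M.map (Int.cast : ℤ → ℚ)).det := by
  have hreal : (D.M.map (Int.cast : ℤ → ℝ)).det ≠ 0 := by
    intro hdet
    obtain ⟨v, hv, hMv⟩ := exists_mulVec_eq_zero_iff.mpr hdet
    simpa [hMv] using D.negdef v hv
  have hint : D.M.det ≠ 0 := by
    intro hdet
    exact hreal (by simpa [hdet] using ((Int.castRingHom ℝ).map_det D.M).symm)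
  rw [isUnit_iff_ne_zero, show (D.M.map (Int.cast : ℤ → ℚ)).det = D.M.det from
    ((Int.castRingHom ℚ).map_det D.M).symm]
  exact_mod_cast hint

theorem negK2_eq_dotProduct (D : ResolutionDatum n) {z : Fin n → ℚ}
    (hz : D.M.map (Int.cast : ℤ → ℚ) *ᵥ z = -D.c) : D.negK2 = D.c ⬝ᵥ z := by
  rw [negK2, ← neg_eq_iff_eq_neg.mpr hz, mulVec_neg, mulVec_mulVec,
    nonsing_inv_mul _ D.isUnit_det, one_mulVec, dotProduct_neg, neg_neg]

end ResolutionDatum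

section RationalCurves

variable {V : Type*} [DecidableEq V]

/-- The intersection matrix of a configuration of rational curves with dual graph `G`, given by
the degrees `c v = K · E_v` of the canonical divisor. By adjunction, `E_v² = -(c v + 2)`. -/
def rationalIntersectionMatrix (G : SimpleGraph V) [DecidableRel G.Adj] (c : V → ℕ) :
    Matrix V V ℤ :=
  G.adjMatrix ℤ - diagonal fun v => (c v : ℤ) + 2

variable {G : SimpleGraph V} [DecidableRel G.Adj] {c : V → ℕ}

theorem rationalIntersectionMatrix_of_ne {v w : V} (h : v ≠ w) :
    rationalIntersectionMatrix G c v w = if G.Adj v w then 1 else 0 := by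
  simp [rationalIntersectionMatrix, h]

theorem rationalIntersectionMatrix_self (v : V) :
    rationalIntersectionMatrix G c v v = -((c v : ℤ) + 2) := by
  simp [rationalIntersectionMatrix]

theorem rationalIntersectionMatrix_isSymm : (rationalIntersectionMatrix G c).IsSymm :=
  (G.isSymm_adjMatrix).sub (isSymm_diagonal _)

theorem fromRel_rationalIntersectionMatrix_pos :
    SimpleGraph.fromRel (fun v w => 0 < rationalIntersectionMatrix G c v w) = G := by
  ext v w
  rw [SimpleGraph.fromRel_adj]
  constructor
  · rintro ⟨hne, h | h⟩
    · by_contra hadj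
      simp [rationalIntersectionMatrix_of_ne hne, hadj] at h
    · by_contra hadj
      simp [rationalIntersectionMatrix_of_ne hne.symm, G.adj_comm w v, hadj] at h
  · exact fun h => ⟨h.ne, .inl (by simp [rationalIntersectionMatrix_of_ne h.ne, h])⟩

variable [Fintype V]

theorem rationalIntersectionMatrix_map_mulVec {R : Type*} [Ring R] (z : V → R) (v : V) :
    ((rationalIntersectionMatrix G c).map (Int.cast : ℤ → R) *ᵥ z) v =
      (G.adjMatrix R *ᵥ z) v - (c v + 2) * z v := by
  have hmap : (rationalIntersectionMatrix G c).map (Int.cast : ℤ → R) =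
      G.adjMatrix R - diagonal fun v => (c v : R) + 2 := by
    ext i j
    simp [rationalIntersectionMatrix, diagonal_apply, apply_ite (Int.cast : ℤ → R)]
  rw [hmap, sub_mulVec, Pi.sub_apply, mulVec_diagonal]

theorem rationalIntersectionMatrix_negDef (hG : G.Connected) {z : V → ℝ} (hz : ∀ v, 0 < z v)
    (hadjunction : ∀ v, (G.adjMatrix ℝ *ᵥ z) v + c v = (c v + 2) * z v) (hc : c ≠ 0)
    (x : V → ℝ) (hx : x ≠ 0) :
    x ⬝ᵥ ((rationalIntersectionMatrix G c).map (Int.cast : ℤ → ℝ) *ᵥ x) < 0 := by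
  have hMz (v : V) :
      ((rationalIntersectionMatrix G c).map (Int.cast : ℤ → ℝ) *ᵥ z) v = -c v := by
    rw [rationalIntersectionMatrix_map_mulVec]
    linarith [hadjunction v]
  obtain ⟨v, hv⟩ := Function.ne_iff.mp hc
  refine dotProduct_mulVec_neg_of_exists_pos_mulVec_nonpos
    (rationalIntersectionMatrix_isSymm.map _) (fun v w hvw => ?_) hG (fun v w hvw => ?_) hz
    (fun v => by simp [hMz]) ⟨v, by simpa [hMz, Nat.pos_iff_ne_zero] using hv⟩ hx
  · rw [map_apply, rationalIntersectionMatrix_of_ne hvw]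
    split_ifs <;> simp
  · simp [rationalIntersectionMatrix_of_ne hvw.ne, hvw]

/-- The resolution datum of a configuration of rational curves with dual graph `G` and canonical
degrees `c`. -/
def ResolutionDatum.ofRationalCurves {n : ℕ} (G : SimpleGraph (Fin n)) [DecidableRel G.Adj]
    (c : Fin n → ℕ) (hG : G.Connected)
    (hneg : ∀ x : Fin n → ℝ, x ≠ 0 →
      x ⬝ᵥ ((rationalIntersectionMatrix G c).map (Int.cast : ℤ → ℝ) *ᵥ x) < 0) :
    ResolutionDatum n where
  M := rationalIntersectionMatrix G c
  p := 0
  symm := rationalIntersectionMatrix_isSymm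
  negdef := hneg
  offdiag_nonneg v w hvw := by
    rw [rationalIntersectionMatrix_of_ne hvw]
    split_ifs <;> simp
  diag_le_neg_two v _ := by
    rw [rationalIntersectionMatrix_self]
    lia
  connected := by rwa [fromRel_rationalIntersectionMatrix_pos]

theorem ResolutionDatum.ofRationalCurves_c {n : ℕ} (G : SimpleGraph (Fin n)) [DecidableRel G.Adj]
    (c : Fin n → ℕ) (hG hneg) (v : Fin n) : (ofRationalCurves G c hG hneg).c v = c v := by
  simp [ResolutionDatum.c, ofRationalCurves, rationalIntersectionMatrix_self]

theorem dotProduct_mem_negK2Set_of_fin {n : ℕ} {G : SimpleGraph (Fin n)} [DecidableRel G.Adj]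
    {c : Fin n → ℕ} (hG : G.Connected) {z : Fin n → ℚ} (hz : ∀ v, 0 < z v)
    (hadjunction : ∀ v, (G.adjMatrix ℚ *ᵥ z) v + c v = (c v + 2) * z v) (hc : c ≠ 0) :
    (((fun v => (c v : ℚ)) ⬝ᵥ z : ℚ) : ℝ) ∈ negK2Set := by
  have hneg := rationalIntersectionMatrix_negDef hG (z := fun v => (z v : ℝ))
    (fun v => by exact_mod_cast hz v)
    (fun v => by
      have h := hadjunction v
      rw [SimpleGraph.adjMatrix_mulVec_apply] at h ⊢
      exact_mod_cast h) hc
  refine ⟨n, Fin.pos_iff_nonempty.mpr hG.nonempty, .ofRationalCurves G c hG hneg, ?_⟩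
  have hc_eq := funext (ResolutionDatum.ofRationalCurves_c G c hG hneg)
  rw [ResolutionDatum.negK2_eq_dotProduct, hc_eq]
  ext v
  rw [Pi.neg_apply, hc_eq]
  refine (rationalIntersectionMatrix_map_mulVec z v).trans ?_
  linarith [hadjunction v]

end RationalCurves

theorem dotProduct_mem_negK2Set {V : Type*} [Fintype V] {G : SimpleGraph V} [DecidableRel G.Adj]
    {c : V → ℕ} (hG : G.Connected) {z : V → ℚ} (hz : ∀ v, 0 < z v)
    (hadjunction : ∀ v, (G.adjMatrix ℚ *ᵥ z) v + c v = (c v + 2) * z v) (hc : c ≠ 0) :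
    (((fun v => (c v : ℚ)) ⬝ᵥ z : ℚ) : ℝ) ∈ negK2Set := by
  let e := (Fintype.equivFin V).symm
  have hsum : (fun v => (c v : ℚ)) ⬝ᵥ z = (fun v => ((c ∘ e) v : ℚ)) ⬝ᵥ (z ∘ e) :=
    (Equiv.sum_comp e fun v => (c v : ℚ) * z v).symm
  rw [hsum]
  refine dotProduct_mem_negK2Set_of_fin (G := G.comap e)
    ((SimpleGraph.Iso.comap e G).connected_iff.mpr hG) (fun v => hz (e v)) (fun v => ?_) ?_
  · have hsub : (G.comap e).adjMatrix ℚ = (G.adjMatrix ℚ).submatrix e e :=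
      ((SimpleGraph.Iso.comap e G).toEmbedding.submatrix_adjMatrix (α := ℚ)).symm
    rw [hsub, submatrix_mulVec_equiv, Function.comp_assoc, e.self_comp_symm, Function.comp_id]
    exact hadjunction (e v)
  · rwa [ne_eq, ← Pi.zero_comp e, e.surjective.injective_comp_right.eq_iff]

section Spider

variable {ι : Type*} {n : ℕ}

/-- The spider: a central vertex `none` and, for every `i : ι`, a leg `some (i, 0)`, …,
`some (i, n - 1)` joined to the centre at `some (i, 0)`. -/
def spiderGraph (ι : Type*) (n : ℕ) : SimpleGraph (Option (ι × Fin n)) where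
  Adj
    | none, none => False
    | none, some (_, b) => (b : ℕ) = 0
    | some (_, a), none => (a : ℕ) = 0
    | some (i, a), some (j, b) => i = j ∧ ((a : ℕ) + 1 = b ∨ (b : ℕ) + 1 = a)
  symm := ⟨by
    rintro (_ | ⟨i, a⟩) (_ | ⟨j, b⟩) h
    · exact h
    · exact h
    · exact h
    · exact ⟨h.1.symm, h.2.symm⟩⟩
  loopless := ⟨by
    rintro (_ | ⟨i, a⟩) h
    · exact h
    · exact h.2.elim (Nat.succ_ne_self _) (Nat.succ_ne_self _)⟩

@[simp]
theorem spiderGraph_adj_none_some {i : ι} {a : Fin n} :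
    (spiderGraph ι n).Adj none (some (i, a)) ↔ (a : ℕ) = 0 :=
  Iff.rfl

@[simp]
theorem spiderGraph_adj_some_none {i : ι} {a : Fin n} :
    (spiderGraph ι n).Adj (some (i, a)) none ↔ (a : ℕ) = 0 :=
  Iff.rfl

@[simp]
theorem spiderGraph_adj_some_some {i j : ι} {a b : Fin n} :
    (spiderGraph ι n).Adj (some (i, a)) (some (j, b)) ↔
      i = j ∧ ((a : ℕ) + 1 = b ∨ (b : ℕ) + 1 = a) :=
  Iff.rfl

/-- The distance from the centre of the spider. -/
def spiderDepth : Option (ι × Fin n) → ℕ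
  | none => 0
  | some (_, a) => a + 1

theorem spiderDepth_le : ∀ v : Option (ι × Fin n), spiderDepth v ≤ n
  | none => n.zero_le
  | some (_, a) => a.isLt

theorem spiderGraph_connected : (spiderGraph ι n).Connected := by
  refine (SimpleGraph.connected_iff_exists_forall_reachable _).2 ⟨none, ?_⟩
  rintro (_ | ⟨i, a, ha⟩)
  · rfl
  induction a with
  | zero => exact SimpleGraph.Adj.reachable rfl
  | succ a ih => exact (ih (by lia)).trans (SimpleGraph.Adj.reachable ⟨rfl, .inl rfl⟩)

theorem sum_fin_ite_val_eq {R : Type*} [AddCommMonoid R] (f : ℕ → R) (hf : f n = 0) {a : ℕ}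
    (ha : a ≤ n) : ∑ b : Fin n, (if (b : ℕ) = a then f b else 0) = f a := by
  rw [Fin.sum_univ_eq_sum_range (fun b => if b = a then f b else 0), Finset.sum_ite_eq']
  rcases ha.lt_or_eq with h | rfl
  · simp [h]
  · simp [hf]

variable [Fintype ι] [DecidableRel (spiderGraph ι n).Adj] {R : Type*}
  [NonAssocSemiring R]

theorem spiderGraph_adjMatrix_mulVec_none (f : ℕ → R) (hf : f (n + 1) = 0) :
    ((spiderGraph ι n).adjMatrix R *ᵥ (f ∘ spiderDepth)) none = Fintype.card ι * f 1 := by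
  have hleg : ∑ b : Fin n, (if (b : ℕ) = 0 then f (b + 1) else 0) = f 1 :=
    sum_fin_ite_val_eq (fun b => f (b + 1)) hf n.zero_le
  simp [mulVec, dotProduct, SimpleGraph.adjMatrix_apply, Fintype.sum_option,
    Fintype.sum_prod_type, spiderDepth, hleg]

theorem spiderGraph_adjMatrix_mulVec_some (f : ℕ → R) (hf : f (n + 1) = 0) (i : ι) (a : Fin n) :
    ((spiderGraph ι n).adjMatrix R *ᵥ (f ∘ spiderDepth)) (some (i, a)) = f a + f (a + 2) := by
  classical
  have hnext : ∑ b : Fin n, (if (a : ℕ) + 1 = b then f (b + 1) else 0) = f (a + 2) := by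
    simpa only [eq_comm] using sum_fin_ite_val_eq (fun b => f (b + 1)) hf a.isLt
  have hprev : (if (a : ℕ) = 0 then f 0 else 0) +
      ∑ b : Fin n, (if (b : ℕ) + 1 = a then f (b + 1) else 0) = f a := by
    obtain ⟨_ | a, ha⟩ := a
    · simp
    · simpa using sum_fin_ite_val_eq (fun b => f (b + 1)) hf (Nat.lt_of_succ_lt ha).le
  have hsplit (b : Fin n) : (if (a : ℕ) + 1 = b ∨ (b : ℕ) + 1 = a then f (b + 1) else 0) =
      (if (a : ℕ) + 1 = b then f (b + 1) else 0) +
        if (b : ℕ) + 1 = a then f (b + 1) else 0 := by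
    split_ifs <;> first | lia | simp
  have hleg (j : ι) : ∑ b : Fin n, (if i = j ∧ ((a : ℕ) + 1 = b ∨ (b : ℕ) + 1 = a) then
      f (b + 1) else 0) = if i = j then
        f (a + 2) + ∑ b : Fin n, (if (b : ℕ) + 1 = a then f (b + 1) else 0) else 0 := by
    by_cases hij : i = j
    · simp only [hij, true_and, hsplit, Finset.sum_add_distrib, hnext, if_true]
    · simp [hij]
  simp only [mulVec, dotProduct, SimpleGraph.adjMatrix_apply, Fintype.sum_option,
    Fintype.sum_prod_type, spiderDepth, Function.comp_apply, spiderGraph_adj_some_none,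
    spiderGraph_adj_some_some, ite_mul, one_mul, zero_mul, hleg, Finset.sum_ite_eq,
    Finset.mem_univ, if_true]
  rw [← hprev]
  abel

/-- The degrees `K · E_v` for the spider of rational curves whose central curve has
self-intersection `-(r + 2)` and whose legs consist of `(-2)`-curves. -/
def spiderCanonicalDegree (r : ℕ) (v : Option (ι × Fin n)) : ℕ :=
  v.elim r fun _ => 0

/-- The coefficient of the numerical cycle `-K` at distance `d` from the centre, for a spider with
`m` legs of length `n` and central curve of self-intersection `-(r + 2)`. On the `(-2)`-curves
the adjunction equation says that it is linear in `d` and extends by `0` to `d = n + 1`; the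
denominator, which the equation at the centre forces, is the determinant of the intersection form
up to sign and a power of `n + 1`. -/
def spiderAnticanonical (r m n d : ℕ) : ℚ :=
  r * (n + 1 - d) / ((r + 2) * (n + 1) - m * n)

theorem spiderAnticanonical_succ (r m n : ℕ) : spiderAnticanonical r m n (n + 1) = 0 := by
  simp [spiderAnticanonical]

theorem spiderAnticanonical_pos {r m d : ℕ} (hr : 0 < r) (hneg : m * n < (r + 2) * (n + 1))
    (hd : d ≤ n) : 0 < spiderAnticanonical r m n d := by
  have hden : (0 : ℚ) < (r + 2) * (n + 1) - m * n := sub_pos.mpr (by exact_mod_cast hneg)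
  have hdist : (0 : ℚ) < n + 1 - d := sub_pos.mpr (by exact_mod_cast Nat.lt_succ_of_le hd)
  exact div_pos (mul_pos (by exact_mod_cast hr) hdist) hden

theorem spiderAnticanonical_adjunction {r : ℕ}
    (hneg : Fintype.card ι * n < (r + 2) * (n + 1)) (v : Option (ι × Fin n)) :
    ((spiderGraph ι n).adjMatrix ℚ *ᵥ
        (spiderAnticanonical r (Fintype.card ι) n ∘ spiderDepth)) v + spiderCanonicalDegree r v =
      (spiderCanonicalDegree r v + 2) *
        (spiderAnticanonical r (Fintype.card ι) n ∘ spiderDepth) v := by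
  have hden_pos : (0 : ℚ) < (r + 2) * (n + 1) - Fintype.card ι * n :=
    sub_pos.mpr (by exact_mod_cast hneg)
  rcases v with _ | ⟨i, a⟩
  · rw [spiderGraph_adjMatrix_mulVec_none _ (spiderAnticanonical_succ ..)]
    simp only [spiderAnticanonical, spiderCanonicalDegree, spiderDepth, Function.comp_apply,
      Option.elim]
    set den : ℚ := (r + 2) * (n + 1) - Fintype.card ι * n with hden
    push_cast
    field_simp
    rw [hden]
    ring
  · rw [spiderGraph_adjMatrix_mulVec_some _ (spiderAnticanonical_succ ..)]
    simp only [spiderAnticanonical, spiderCanonicalDegree, spiderDepth, Function.comp_apply,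
      Option.elim]
    push_cast
    ring

theorem spider_mem_negK2Set {r m n : ℕ} (hr : 0 < r) (hneg : m * n < (r + 2) * (n + 1)) :
    (r : ℝ) ^ 2 / (r + 2 - m + m / (n + 1)) ∈ negK2Set := by
  classical
  have hpos (v : Option (Fin m × Fin n)) :
      0 < (spiderAnticanonical r (Fintype.card (Fin m)) n ∘ spiderDepth) v :=
    spiderAnticanonical_pos hr (by simpa using hneg) (spiderDepth_le v)
  have hc : spiderCanonicalDegree (ι := Fin m) (n := n) r ≠ 0 :=
    fun h => hr.ne' (congrFun h none)
  convert dotProduct_mem_negK2Set spiderGraph_connected hpos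
    (spiderAnticanonical_adjunction (by simpa using hneg)) hc
  have hden : (r : ℝ) + 2 - m + m / (n + 1) = ((r + 2) * (n + 1) - m * n) / (n + 1) := by
    field_simp
    ring
  simp only [dotProduct, Fintype.sum_option, spiderCanonicalDegree, spiderAnticanonical,
    Function.comp_apply, spiderDepth, Option.elim, Nat.cast_zero, zero_mul,
    Finset.sum_const_zero, add_zero, sub_zero, Fintype.card_fin]
  push_cast
  rw [hden, div_div_eq_mul_div]
  ring

end Spider

theorem tendsto_div_add_div_succ (a b : ℝ) {k : ℝ} (hk : k ≠ 0) :
    Tendsto (fun n : ℕ => a / (k + b / (n + 1))) atTop (𝓝 (a / k)) := by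
  have hb : Tendsto (fun n : ℕ => b / ((n : ℝ) + 1)) atTop (𝓝 0) := by
    simpa [div_eq_mul_inv] using tendsto_one_div_add_atTop_nhds_zero_nat.const_mul b
  have hden := hb.const_add k
  rw [add_zero] at hden
  exact tendsto_const_nhds.div hden hk

/-- **Proposition 2.5.** For positive integers `r ≥ k - 1`, the rational number `r²/k` is an
accumulation point of the set of values `-K²`. -/
theorem negK2Set_accumulation_r_sq_div_k (r k : ℕ) (hr : 0 < r) (hk : 0 < k)
    (hrk : k - 1 ≤ r) :
    ∀ ε : ℝ, 0 < ε →
      ∃ s ∈ negK2Set, s ≠ (r : ℝ) ^ 2 / (k : ℝ) ∧ |s - (r : ℝ) ^ 2 / (k : ℝ)| < ε := by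
  intro ε hε
  obtain ⟨m, hkm⟩ : ∃ m, k + m = r + 2 := Nat.le.dest (by lia)
  have hkm_real : (k : ℝ) = r + 2 - m := eq_sub_of_add_eq (by exact_mod_cast hkm)
  have hr_pos : (0 : ℝ) < r := by exact_mod_cast hr
  have hk_pos : (0 : ℝ) < k := by exact_mod_cast hk
  obtain ⟨n, hn⟩ :=
    (Metric.tendsto_nhds.mp (tendsto_div_add_div_succ ((r : ℝ) ^ 2) m hk_pos.ne') ε hε).exists
  refine ⟨(r : ℝ) ^ 2 / (k + m / (n + 1)), ?_, ne_of_lt ?_, by rwa [← Real.dist_eq]⟩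
  · rw [hkm_real]
    exact spider_mem_negK2Set hr (by nlinarith)
  · have hm_pos : (0 : ℝ) < m := by exact_mod_cast (show 0 < m by lia)
    have hleg_pos : 0 < (m : ℝ) / (n + 1) := by positivity
    exact div_lt_div_of_pos_left (pow_pos hr_pos 2) hk_pos (lt_add_of_pos_right _ hleg_pos)
end

section
/- Every positive integer n is an accumulation point of S, i.e., for every ε > 0 there exists s ∈ S with s ≠ n and |s - n| < ε. -/
open Matrix

/-!
Attach a chain of `k` rational `-2`-curves to each side of a rational `-(n + 2)`-curve. Then `c` is
`n` times the indicator of the central curve, so the solution of `M x = -c` is a multiple of the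
discrete Green's function of the path with pole at its centre, which is a tent function. This gives
`-K² = n² (k + 1) / (n (k + 1) + 2)`, which lies strictly below `n` and tends to `n` as `k → ∞`.

The intersection form is negative definite because it is minus the sum of the graph Laplacian and
the nonnegative diagonal matrix with entries `b i - deg i`: the Laplacian form of a connected graph
vanishes only on constants, and the diagonal part is positive on nonzero constants.
-/

section AdjMatrixSubDiagonal

variable {V : Type*} [DecidableEq V] (G : SimpleGraph V) [DecidableRel G.Adj]

theorem map_intCast_adjMatrix_sub_diagonal {R : Type*} [AddGroupWithOne R] (b : V → ℤ) :
    (G.adjMatrix ℤ - diagonal b).map (Int.cast : ℤ → R) =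
      G.adjMatrix R - diagonal fun v => (b v : R) := by
  ext v w
  simp [SimpleGraph.adjMatrix_apply, diagonal_apply, apply_ite (Int.cast : ℤ → R)]

variable [Fintype V]

theorem dotProduct_adjMatrix_sub_diagonal_mulVec {R : Type*} [CommRing R] (d x : V → R) :
    x ⬝ᵥ ((G.adjMatrix R - diagonal d) *ᵥ x) =
      -(x ⬝ᵥ (G.lapMatrix R *ᵥ x) + ∑ v, (d v - G.degree v) * x v ^ 2) := by
  have hsplit : G.adjMatrix R - diagonal d =
      -(G.lapMatrix R + diagonal fun v => d v - G.degree v) := by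
    rw [SimpleGraph.lapMatrix, SimpleGraph.degMatrix, ← diagonal_sub]
    abel
  rw [hsplit, neg_mulVec, add_mulVec, dotProduct_neg, dotProduct_add]
  congr 2
  refine Finset.sum_congr rfl fun v _ => ?_
  rw [mulVec_diagonal]
  ring

variable {G}

theorem dotProduct_adjMatrix_sub_diagonal_mulVec_neg {K : Type*} [Field K] [LinearOrder K]
    [IsStrictOrderedRing K] (hG : G.Preconnected) {d : V → K} (hd : ∀ v, G.degree v ≤ d v)
    (hd_lt : ∃ v, G.degree v < d v) {x : V → K} (hx : x ≠ 0) :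
    x ⬝ᵥ ((G.adjMatrix K - diagonal d) *ᵥ x) < 0 := by
  rw [dotProduct_adjMatrix_sub_diagonal_mulVec, neg_lt_zero, ← toLinearMap₂'_apply']
  have hlap : 0 ≤ toLinearMap₂' K (G.lapMatrix K) x x := by
    rw [SimpleGraph.lapMatrix_toLinearMap₂']
    positivity
  have hterm : ∀ v ∈ Finset.univ, 0 ≤ (d v - G.degree v) * x v ^ 2 :=
    fun v _ => mul_nonneg (sub_nonneg.mpr (hd v)) (sq_nonneg _)
  refine (add_nonneg hlap (Finset.sum_nonneg hterm)).lt_of_ne' fun hzero => hx ?_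
  rw [add_eq_zero_iff_of_nonneg hlap (Finset.sum_nonneg hterm),
    SimpleGraph.lapMatrix_toLinearMap₂'_apply'_eq_zero_iff_forall_adj,
    Finset.sum_eq_zero_iff_of_nonneg hterm] at hzero
  obtain ⟨hadj, hterm_zero⟩ := hzero
  obtain ⟨v, hv⟩ := hd_lt
  have hxv : x v = 0 := by
    simpa [(sub_pos.mpr hv).ne'] using hterm_zero v (Finset.mem_univ v)
  funext w
  obtain ⟨walk⟩ := hG w v
  induction walk with
  | nil => exact hxv
  | cons h _ ih => exact (hadj _ _ h).trans (ih hv hxv)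

end AdjMatrixSubDiagonal

section PathGraph

instance decidableRelPathGraphAdj (m : ℕ) : DecidableRel (SimpleGraph.pathGraph m).Adj :=
  fun _ _ => decidable_of_iff' _ SimpleGraph.pathGraph_adj

variable {m : ℕ}

theorem sum_fin_ite_eq {R : Type*} [AddCommMonoid R] {f : ℤ → R} (hleft : f (-1) = 0)
    (hright : f m = 0) {t : ℤ} (ht : -1 ≤ t) (htm : t ≤ m) :
    (∑ j : Fin m, if (j : ℤ) = t then f j else 0) = f t := by
  by_cases hmem : 0 ≤ t ∧ t < m
  · lift t to ℕ using hmem.1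
    rw [Fintype.sum_eq_single ⟨t, by omega⟩ fun j hj => if_neg (by grind)]
    simp
  · have hft : f t = 0 := by
      obtain rfl | rfl : t = -1 ∨ t = m := by omega
      exacts [hleft, hright]
    rw [hft]
    exact Finset.sum_eq_zero fun j _ => if_neg (by omega)

theorem sum_neighborFinset_pathGraph {R : Type*} [AddCommMonoid R] {f : ℤ → R}
    (hleft : f (-1) = 0) (hright : f m = 0) (i : Fin m) :
    ∑ j ∈ (SimpleGraph.pathGraph m).neighborFinset i, f j = f (i - 1) + f (i + 1) := by
  rw [← sum_fin_ite_eq hleft hright (t := i - 1) (by omega) (by omega),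
    ← sum_fin_ite_eq hleft hright (t := i + 1) (by omega) (by omega),
    ← Finset.sum_add_distrib, SimpleGraph.neighborFinset_eq_filter, Finset.sum_filter]
  refine Finset.sum_congr rfl fun j _ => ?_
  simp only [SimpleGraph.pathGraph_adj]
  split_ifs <;> first | omega | simp

theorem degree_pathGraph (i : Fin m) :
    (SimpleGraph.pathGraph m).degree i =
      (if 0 < (i : ℕ) then 1 else 0) + if (i : ℕ) + 1 < m then 1 else 0 := by
  let f : ℤ → ℕ := fun t => if 0 ≤ t ∧ t < m then 1 else 0
  have hf : ∀ j : Fin m, f j = 1 := fun j => if_pos (by omega)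
  calc (SimpleGraph.pathGraph m).degree i
      = ∑ j ∈ (SimpleGraph.pathGraph m).neighborFinset i, f j := by
        simp only [hf, Finset.sum_const, smul_eq_mul, mul_one,
          SimpleGraph.card_neighborFinset_eq_degree]
    _ = f (i - 1) + f (i + 1) := sum_neighborFinset_pathGraph (by simp [f]) (by simp [f]) i
    _ = _ := by grind

end PathGraph

section Tent

/-- The tent function of height `k + 1` on `[-1, 2 * k + 1]`, indexed so that it vanishes just
outside the vertices `0, …, 2 * k` of a path. Up to a factor it is the discrete Green's function
with pole at `k`. -/
def tent (k : ℕ) (t : ℤ) : ℤ :=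
  k + 1 - |t - k|

variable (k : ℕ)

theorem tent_left : tent k (-1) = 0 := by grind [tent]

theorem tent_right : tent k (2 * k + 1) = 0 := by grind [tent]

theorem tent_peak : tent k k = k + 1 := by simp [tent]

theorem tent_sub_one_add_tent_add_one (t : ℤ) :
    tent k (t - 1) + tent k (t + 1) = 2 * tent k t - if t = k then 2 else 0 := by
  grind [tent]

end Tent

namespace ResolutionDatum

section CanonicalCycle

variable {r : ℕ} (D : ResolutionDatum r)

theorem det_ne_zero : D.M.det ≠ 0 := by
  intro hdet
  have hdet_real : (D.M.map (Int.cast : ℤ → ℝ)).det = 0 := by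
    rw [← Int.cast_det, hdet, Int.cast_zero]
  obtain ⟨x, hx, hMx⟩ := exists_mulVec_eq_zero_iff.mpr hdet_real
  simpa [hMx] using D.negdef x hx

/-- The hypothesis says that `-∑ i, x i • A_i` is the numerical canonical cycle. -/
theorem negK2_eq_dotProduct_s12 {x : Fin r → ℚ}
    (hx : D.M.map (Int.cast : ℤ → ℚ) *ᵥ x = -D.c) : D.negK2 = D.c ⬝ᵥ x := by
  have hdet : IsUnit (D.M.map (Int.cast : ℤ → ℚ)).det := by
    rw [← Int.cast_det]
    exact (Int.cast_ne_zero.mpr D.det_ne_zero).isUnit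
  have hinv : (D.M.map (Int.cast : ℤ → ℚ))⁻¹ *ᵥ D.c = -x := by
    rw [← neg_eq_iff_eq_neg.mpr hx, mulVec_neg, mulVec_mulVec, nonsing_inv_mul _ hdet, one_mulVec]
  rw [negK2, hinv, dotProduct_neg, neg_neg]

end CanonicalCycle

section OfGraph

variable {r : ℕ} (G : SimpleGraph (Fin r)) [DecidableRel G.Adj] (b : Fin r → ℤ) (hG : G.Connected)
  (hb : ∀ i, 2 ≤ b i) (hdeg : ∀ i, G.degree i ≤ b i) (hdeg_lt : ∃ i, G.degree i < b i)

/-- Rational curves `A_i` with self-intersections `-b i` that meet transversally, at most once, and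
exactly when they are adjacent in `G`. The degree bounds make the intersection form negative
definite. -/
def ofGraph : ResolutionDatum r where
  M := G.adjMatrix ℤ - diagonal b
  p := 0
  symm := G.isSymm_adjMatrix.sub (isSymm_diagonal b)
  negdef x hx := by
    rw [map_intCast_adjMatrix_sub_diagonal]
    exact dotProduct_adjMatrix_sub_diagonal_mulVec_neg hG.preconnected
      (fun i => mod_cast hdeg i) (hdeg_lt.imp fun i hi => mod_cast hi) hx
  offdiag_nonneg i j hij := by
    rw [Matrix.sub_apply, diagonal_apply_ne b hij, sub_zero, SimpleGraph.adjMatrix_apply]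
    split_ifs <;> decide
  diag_le_neg_two i _ := by simpa using hb i
  connected := hG.mono fun i j hij => by simp [hij, hij.ne]

theorem ofGraph_c (i : Fin r) : (ofGraph G b hG hb hdeg hdeg_lt).c i = b i - 2 := by
  have hdiag : (ofGraph G b hG hb hdeg hdeg_lt).M i i = -b i := by simp [ofGraph]
  have hgenus : (ofGraph G b hG hb hdeg hdeg_lt).p i = 0 := rfl
  rw [c, hdiag, hgenus]
  push_cast
  ring

theorem ofGraph_negK2_eq_dotProduct {x : Fin r → ℚ}
    (hx : ∀ i, ∑ j ∈ G.neighborFinset i, x j - b i * x i = 2 - b i) :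
    (ofGraph G b hG hb hdeg hdeg_lt).negK2 = (fun i => (b i : ℚ) - 2) ⬝ᵥ x := by
  rw [← funext (ofGraph_c G b hG hb hdeg hdeg_lt)]
  refine negK2_eq_dotProduct_s12 _ (funext fun i => ?_)
  change ((G.adjMatrix ℤ - diagonal b).map (Int.cast : ℤ → ℚ) *ᵥ x) i = _
  rw [map_intCast_adjMatrix_sub_diagonal, sub_mulVec, Pi.sub_apply, mulVec_diagonal,
    SimpleGraph.adjMatrix_mulVec_apply, hx, Pi.neg_apply, ofGraph_c, neg_sub]

end OfGraph

section Chain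

variable {m : ℕ} (b : Fin (m + 1) → ℤ) (hb : ∀ i, 2 ≤ b i)

/-- A chain of `m + 1` rational curves with self-intersections `-b i`. -/
def chain : ResolutionDatum (m + 1) :=
  ofGraph (SimpleGraph.pathGraph (m + 1)) b (SimpleGraph.pathGraph_connected m) hb
    (fun i => by grind [degree_pathGraph]) ⟨0, by grind [degree_pathGraph]⟩

theorem chain_negK2_eq_dotProduct {f : ℤ → ℚ} (hleft : f (-1) = 0) (hright : f (m + 1) = 0)
    (hf : ∀ i : Fin (m + 1), f (i - 1) + f (i + 1) - b i * f i = 2 - b i) :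
    (chain b hb).negK2 = (fun i => (b i : ℚ) - 2) ⬝ᵥ fun i => f i := by
  refine ofGraph_negK2_eq_dotProduct _ b _ _ _ _ fun i => ?_
  rw [sum_neighborFinset_pathGraph hleft (mod_cast hright), hf]

end Chain

section SymmetricChain

/-- A rational curve of self-intersection `-(n + 2)` with a chain of `k` rational curves of
self-intersection `-2` attached on each side. -/
def symmetricChain (n k : ℕ) : ResolutionDatum (2 * k + 1) :=
  chain (fun i => if (i : ℕ) = k then n + 2 else 2) fun i => by split_ifs <;> omega

theorem symmetricChain_negK2 (n k : ℕ) :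
    (symmetricChain n k).negK2 = n ^ 2 * (k + 1) / (n * (k + 1) + 2) := by
  let a : ℚ := n / (n * (k + 1) + 2)
  have ha : a * (n * (k + 1) + 2) = n := div_mul_cancel₀ _ (by positivity)
  let center : Fin (2 * k + 1) := ⟨k, by omega⟩
  rw [symmetricChain, chain_negK2_eq_dotProduct (f := fun t => a * tent k t)]
  · rw [dotProduct, Fintype.sum_eq_single center]
    · simp only [center, a, tent_peak, if_true]
      push_cast
      ring
    · intro i hi
      have hik : (i : ℕ) ≠ k := fun h => hi (Fin.ext h)
      simp [hik]
  · simp [tent_left]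
  · simp [tent_right]
  · intro i
    have hsecond : (tent k (i - 1) + tent k (i + 1) : ℚ) =
        2 * tent k i - if (i : ℤ) = k then 2 else 0 :=
      mod_cast tent_sub_one_add_tent_add_one k i
    rw [← mul_add, hsecond]
    by_cases hik : (i : ℕ) = k
    · simp only [hik, if_true, tent_peak]
      push_cast
      linear_combination -ha
    · simp only [hik, Nat.cast_inj, if_false]
      push_cast
      ring

theorem symmetricChain_negK2_lt {n : ℕ} (hn : 0 < n) (k : ℕ) : (symmetricChain n k).negK2 < n := by
  have hn' : (0 : ℚ) < n := Nat.cast_pos.mpr hn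
  rw [symmetricChain_negK2, div_lt_iff₀ (by positivity)]
  linarith

theorem lt_symmetricChain_negK2 (n k : ℕ) :
    n - 2 / (k + 1) < (symmetricChain n k).negK2 := by
  have hdiff : (symmetricChain n k).negK2 - (n - 2 / (k + 1)) =
      4 / ((k + 1) * (n * (k + 1) + 2)) := by
    rw [symmetricChain_negK2]
    field_simp
    ring
  have hpos : (0 : ℚ) < 4 / ((k + 1) * (n * (k + 1) + 2)) := by positivity
  linarith

end SymmetricChain

end ResolutionDatum

/-- **Corollary 2.6.** Every positive integer is an accumulation point of the set of values
`-K²` of normal surface singularities. -/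
theorem negK2Set_accumulation_pos_int (n : ℕ) (hn : 0 < n) :
    ∀ ε : ℝ, 0 < ε → ∃ s ∈ negK2Set, s ≠ (n : ℝ) ∧ |s - (n : ℝ)| < ε := by
  intro ε hε
  obtain ⟨k, hk⟩ := exists_nat_one_div_lt (half_pos hε)
  let D := ResolutionDatum.symmetricChain n k
  have hlt : (D.negK2 : ℝ) < n := mod_cast ResolutionDatum.symmetricChain_negK2_lt hn k
  have hgt : (n : ℝ) - 2 / (k + 1) < D.negK2 := by
    have h := (Rat.cast_lt (K := ℝ)).mpr (ResolutionDatum.lt_symmetricChain_negK2 n k)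
    push_cast at h
    exact h
  have hsmall : (2 : ℝ) / (k + 1) < ε := by
    rwa [lt_div_iff₀ two_pos, one_div_mul_eq_div] at hk
  refine ⟨D.negK2, ⟨_, Nat.succ_pos _, D, rfl⟩, hlt.ne, abs_lt.mpr ⟨?_, ?_⟩⟩ <;> linarith
end

section
/- Let α ∈ ℝ with 0 ≤ α ≤ 1. Then α is an accumulation point of S (i.e., for every ε > 0 there exists s ∈ S with s ≠ α and |s - α| < ε) if and only if α = 1 or α = m/(m+1) for some positive integer m. -/
open Matrix

/-!
If `-K² < 1`, Cauchy–Schwarz for `q(x) = xᵀ(-M)x` gives `(x · c)² < q(x)` for all `x ≠ 0`. On the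
all-ones vector, `q ≤ 2 + ∑ cᵢ - 2 ∑ pᵢ` since the dual graph is connected; so all `pᵢ` vanish and
`c` is `0` or a unit vector `e_v`, and the vectors `e_i + e_j` show that all off-diagonal entries of
`M` are at most `1`. Hence `-K² = 0`, or `-M = C + E_vv` with `C` the positive definite Cartan
matrix of a graph and `-K² = w / (1 + w)`, where `w = (C⁻¹)_vv`.

If the graph is a path with `v` in position `k` of `k + l - 1`, then `w = kl / (k + l)` and
`-K² = kl / (kl + k + l)`, which tends to `k / (k + 1)` as `l → ∞`. If some vertex has degree at
least `3`, then `det C ≤ 16`, so `-K²` has the form `n / (n + d)` with `d ≤ 16`; for fixed `d` these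
values accumulate only at `1`.
-/

section QuadraticForm

variable {ι R : Type*} [Fintype ι] [CommRing R]

lemma dotProduct_mulVec_comm_of_isSymm {A : Matrix ι ι R}
    (hA : A.IsSymm) (x y : ι → R) : x ⬝ᵥ A *ᵥ y = y ⬝ᵥ A *ᵥ x := by
  rw [dotProduct_mulVec, ← mulVec_transpose, hA.eq, dotProduct_comm]

lemma add_dotProduct_mulVec_add {A : Matrix ι ι R}
    (hA : A.IsSymm) (x y : ι → R) :
    (x + y) ⬝ᵥ A *ᵥ (x + y) = x ⬝ᵥ A *ᵥ x + 2 * (y ⬝ᵥ A *ᵥ x) + y ⬝ᵥ A *ᵥ y := by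
  rw [mulVec_add, add_dotProduct, dotProduct_add, dotProduct_add,
    dotProduct_mulVec_comm_of_isSymm hA x y]
  ring

variable [DecidableEq ι]

lemma det_mul_apply_eq_adjugate {B : Matrix ι ι R} {u : ι} {y : ι → R}
    (hy : B *ᵥ y = Pi.single u 1) (v : ι) : B.det * y v = B.adjugate v u := by
  have h := congrArg (B.adjugate *ᵥ ·) hy
  simp only [mulVec_mulVec, adjugate_mul, smul_mulVec, one_mulVec, mulVec_single_one] at h
  exact congrFun h v

/-- The principal block of `A` on `s`, padded with the identity outside `s` so that it keeps the
index type of `A`; its determinant is the principal minor of `A` on `s`. -/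
def principalBlock (A : Matrix ι ι R) (s : Finset ι) : Matrix ι ι R :=
  of fun i j => if i ∈ s ∧ j ∈ s then A i j else if i = j then 1 else 0

lemma principalBlock_mulVec_apply (A : Matrix ι ι R) (s : Finset ι) (x : ι → R) (i : ι) :
    (principalBlock A s *ᵥ x) i = if i ∈ s then (A *ᵥ s.piecewise x 0) i else x i := by
  by_cases hi : i ∈ s
  · rw [if_pos hi]
    refine Finset.sum_congr rfl fun j _ => ?_
    by_cases hj : j ∈ s
    · simp [principalBlock, hi, hj]
    · simp [principalBlock, hj, ne_of_mem_of_not_mem hi hj]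
  · simp [principalBlock, mulVec, dotProduct, hi]

lemma dotProduct_principalBlock_mulVec (A : Matrix ι ι R) (s : Finset ι) (x : ι → R) :
    x ⬝ᵥ principalBlock A s *ᵥ x
      = s.piecewise x 0 ⬝ᵥ A *ᵥ s.piecewise x 0 + ∑ i ∈ sᶜ, x i ^ 2 := by
  simp only [dotProduct, principalBlock_mulVec_apply]
  rw [← Finset.sum_add_sum_compl s, ← Finset.sum_add_sum_compl s]
  rw [Finset.sum_eq_zero (s := sᶜ) (f := fun i => s.piecewise x 0 i * _)]
  · rw [add_zero]
    congr 1 <;> refine Finset.sum_congr rfl fun i hi => ?_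
    · simp [hi]
    · simp [Finset.mem_compl.1 hi, sq]
  · intro i hi
    simp [Finset.mem_compl.1 hi]

lemma adjugate_principalBlock_insert (A : Matrix ι ι R) {s : Finset ι} {u : ι} (hu : u ∉ s) :
    (principalBlock A (insert u s)).adjugate u u = (principalBlock A s).det := by
  set B := (principalBlock A (insert u s)).updateRow u (Pi.single u 1) with hB
  have hrow : B.adjugate u u = (principalBlock A (insert u s)).adjugate u u := by
    rw [adjugate_apply, adjugate_apply, hB, updateRow_idem]
  have hcol : Bᵀ.updateRow u (Pi.single u 1) = (principalBlock A s)ᵀ := by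
    ext i j
    by_cases hi : i = u <;> by_cases hj : j = u <;>
      simp_all [principalBlock, updateRow_apply, Pi.single_apply, eq_comm]
  rw [← hrow, ← transpose_apply B.adjugate, adjugate_transpose, adjugate_apply, hcol, det_transpose]

end QuadraticForm

section PositiveDefinite

variable {ι : Type*} [Fintype ι] {A : Matrix ι ι ℝ}

lemma posDef_iff_isSymm_and_forall_pos :
    A.PosDef ↔ A.IsSymm ∧ ∀ x, x ≠ 0 → 0 < x ⬝ᵥ A *ᵥ x := by
  simp [posDef_iff_dotProduct_mulVec]

lemma sq_dotProduct_le_of_posDef (hA : A.PosDef) {y b : ι → ℝ} (hy : A *ᵥ y = b) (x : ι → ℝ) :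
    (x ⬝ᵥ b) ^ 2 ≤ (x ⬝ᵥ A *ᵥ x) * (b ⬝ᵥ y) := by
  classical
  have hsymm := (posDef_iff_isSymm_and_forall_pos.1 hA).1
  have h := LinearMap.BilinForm.apply_sq_le_of_symm (toBilin' A)
    (fun z => by simpa [toBilin'_apply'] using hA.posSemidef.dotProduct_mulVec_nonneg z)
    ⟨fun z w => by simpa [toBilin'_apply'] using dotProduct_mulVec_comm_of_isSymm hsymm z w⟩ x y
  simpa only [toBilin'_apply', hy, dotProduct_comm y b] using h

lemma exists_mulVec_eq_of_posDef (hA : A.PosDef) (b : ι → ℝ) : ∃ y, A *ᵥ y = b := by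
  classical
  exact ⟨A⁻¹ *ᵥ b, by rw [mulVec_mulVec, mul_nonsing_inv _ hA.det_pos.ne'.isUnit, one_mulVec]⟩

variable [DecidableEq ι]

lemma principalBlock_posDef (hA : A.PosDef) (s : Finset ι) : (principalBlock A s).PosDef := by
  obtain ⟨hsymm, hpos⟩ := posDef_iff_isSymm_and_forall_pos.1 hA
  refine posDef_iff_isSymm_and_forall_pos.2 ⟨?_, fun x hx => ?_⟩
  · ext i j
    simp only [principalBlock, transpose_apply, of_apply, hsymm.apply, eq_comm (a := j),
      and_comm (a := j ∈ s)]
  rw [dotProduct_principalBlock_mulVec]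
  have hcompl : 0 ≤ ∑ i ∈ sᶜ, x i ^ 2 := Finset.sum_nonneg fun _ _ => sq_nonneg _
  by_cases h : s.piecewise x 0 = 0
  · obtain ⟨i, hi⟩ := Function.ne_iff.1 hx
    have his : i ∈ sᶜ := Finset.mem_compl.2 fun his => hi (by simpa [his] using congrFun h i)
    rw [h, zero_dotProduct, zero_add]
    exact Finset.sum_pos' (fun _ _ => sq_nonneg _) ⟨i, his, pow_two_pos_of_ne_zero hi⟩
  · exact add_pos_of_pos_of_nonneg (hpos _ h) hcompl

/- The ratio of the two determinants is the minimum of the form over all admissible `f`. -/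
lemma det_principalBlock_insert_le (hA : A.PosDef) {s : Finset ι} {u : ι} (hu : u ∉ s)
    {f : ι → ℝ} (hf : ∀ i ∉ insert u s, f i = 0) (hfu : f u = 1) :
    (principalBlock A (insert u s)).det ≤ (f ⬝ᵥ A *ᵥ f) * (principalBlock A s).det := by
  have hB := principalBlock_posDef hA (insert u s)
  obtain ⟨y, hy⟩ := exists_mulVec_eq_of_posDef hB (Pi.single u 1)
  have hform : f ⬝ᵥ principalBlock A (insert u s) *ᵥ f = f ⬝ᵥ A *ᵥ f := by
    have hpiece : (insert u s).piecewise f 0 = f := by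
      ext i
      by_cases hi : i ∈ insert u s
      · rw [Finset.piecewise_eq_of_mem _ _ _ hi]
      · rw [Finset.piecewise_eq_of_notMem _ _ _ hi, hf i hi, Pi.zero_apply]
    rw [dotProduct_principalBlock_mulVec, hpiece, Finset.sum_eq_zero, add_zero]
    intro i hi
    rw [hf i (Finset.mem_compl.1 hi), sq, zero_mul]
  have hle : 1 ≤ (f ⬝ᵥ A *ᵥ f) * y u := by
    simpa [hform, hfu] using sq_dotProduct_le_of_posDef hB hy f
  rw [← adjugate_principalBlock_insert A hu, ← det_mul_apply_eq_adjugate hy u]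
  nlinarith [hB.det_pos]

lemma det_principalBlock_le_prod (hA : A.PosDef) (s : Finset ι) :
    (principalBlock A s).det ≤ ∏ i ∈ s, A i i := by
  induction s using Finset.induction_on with
  | empty =>
    have hone : principalBlock A ∅ = 1 := by
      ext i j
      simp [principalBlock, one_apply]
    rw [hone, det_one, Finset.prod_empty]
  | insert u s hu ih =>
    have h := det_principalBlock_insert_le hA hu (f := Pi.single u 1)
      (fun i hi => Pi.single_eq_of_ne (by rintro rfl; exact hi (Finset.mem_insert_self i s)) 1)
      (Pi.single_eq_same u 1)
    rw [single_dotProduct, mulVec_single_one, col_apply, one_mul] at h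
    rw [Finset.prod_insert hu]
    exact h.trans (mul_le_mul_of_nonneg_left ih hA.diag_pos.le)

end PositiveDefinite

lemma exists_adj_mem_notMem {V : Type*} [Fintype V] {G : SimpleGraph V}
    (hG : G.Connected) {s : Finset V} (hs : s.Nonempty) (hsu : s ≠ Finset.univ) :
    ∃ y ∈ s, ∃ u ∉ s, G.Adj y u := by
  obtain ⟨a, ha⟩ := hs
  obtain ⟨b, hb⟩ : ∃ b, b ∉ s := by
    by_contra! h
    exact hsu (Finset.eq_univ_of_forall h)
  obtain ⟨p⟩ := hG.preconnected a b
  obtain ⟨d, -, hfst, hsnd⟩ := p.exists_boundary_dart (s : Set V) ha hb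
  exact ⟨d.fst, hfst, d.snd, hsnd, d.adj⟩

section CartanMatrix

variable {V : Type*} [DecidableEq V] (R : Type*) [CommRing R] (G : SimpleGraph V)
  [DecidableRel G.Adj]

/-- The generalized Cartan matrix `2 - adjacency` of a simple graph. -/
def graphCartanMatrix : Matrix V V R :=
  diagonal 2 - G.adjMatrix R

lemma graphCartanMatrix_apply_self (i : V) : graphCartanMatrix R G i i = 2 := by
  simp [graphCartanMatrix]

variable {G} in
lemma graphCartanMatrix_apply_of_ne {i j : V} (hij : i ≠ j) :
    graphCartanMatrix R G i j = if G.Adj i j then -1 else 0 := by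
  split_ifs with hadj <;> simp [graphCartanMatrix, hij, hadj]

lemma isSymm_graphCartanMatrix : (graphCartanMatrix R G).IsSymm :=
  (isSymm_diagonal 2).sub G.isSymm_adjMatrix

lemma map_intCast_graphCartanMatrix :
    (graphCartanMatrix ℤ G).map (Int.cast : ℤ → R) = graphCartanMatrix R G := by
  ext i j
  by_cases hij : i = j <;> by_cases hadj : G.Adj i j <;>
    simp [graphCartanMatrix, SimpleGraph.adjMatrix_apply, hij, hadj]

variable [Fintype V]

variable {R} in
lemma graphCartanMatrix_mulVec_apply (x : V → R) (i : V) :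
    (graphCartanMatrix R G *ᵥ x) i = 2 * x i - ∑ j ∈ G.neighborFinset i, x j := by
  simp [graphCartanMatrix, sub_mulVec, mulVec_diagonal]

end CartanMatrix

section DynkinGraph

variable {V : Type*} [Fintype V] [DecidableEq V] (G : SimpleGraph V) [DecidableRel G.Adj]

/-- The quadratic form `2 ∑ xᵢ² - 2 ∑ xᵢ xⱼ` of a graph, the second sum running over its edges. -/
def cartanForm (x : V → ℝ) : ℝ :=
  x ⬝ᵥ graphCartanMatrix ℝ G *ᵥ x

/-- A simply laced Dynkin diagram: a connected graph whose Cartan matrix is positive definite. -/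
structure IsDynkin : Prop where
  connected : G.Connected
  posDef : (graphCartanMatrix ℝ G).PosDef

variable {G}

lemma cartanForm_single (x : V) : cartanForm G (Pi.single x 1) = 2 := by
  rw [cartanForm, single_dotProduct, mulVec_single_one, col_apply, graphCartanMatrix_apply_self,
    one_mul]

lemma cartanForm_add_single_le {f : V → ℝ} (hf : 0 ≤ f) {u y : V} (hadj : G.Adj u y)
    (hfu : f u = 0) {t : ℝ} (ht : 0 ≤ t) :
    cartanForm G (f + Pi.single u t) ≤ cartanForm G f - 2 * t * f y + 2 * t ^ 2 := by
  have hsum : f y ≤ ∑ j ∈ G.neighborFinset u, f j :=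
    Finset.single_le_sum (fun j _ => hf j) ((G.mem_neighborFinset u y).2 hadj)
  have hself : Pi.single u t ⬝ᵥ graphCartanMatrix ℝ G *ᵥ Pi.single u t = 2 * t ^ 2 := by
    rw [single_dotProduct, mulVec_single]
    simp only [Pi.smul_apply, col_apply, graphCartanMatrix_apply_self,
      MulOpposite.smul_eq_mul_unop, MulOpposite.unop_op]
    ring
  rw [cartanForm, add_dotProduct_mulVec_add (isSymm_graphCartanMatrix ℝ G), hself,
    single_dotProduct, graphCartanMatrix_mulVec_apply, hfu, cartanForm]
  nlinarith

variable (G) in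
/-- A vertex set is saturated if each of its vertices carries mass at least one of some
nonnegative vector supported on the set and of form value at most one. Attaching further vertices
to such a set does not increase the corresponding principal minor of the Cartan matrix. -/
def IsSaturated (s : Finset V) : Prop :=
  ∀ y ∈ s, ∃ f : V → ℝ, 0 ≤ f ∧ (∀ i ∉ s, f i = 0) ∧ 1 ≤ f y ∧ cartanForm G f ≤ 1

lemma IsSaturated.exists_extension {s : Finset V} (hs : IsSaturated G s) {y u : V} (hy : y ∈ s)
    (hu : u ∉ s) (hadj : G.Adj y u) :
    ∃ f : V → ℝ, 0 ≤ f ∧ (∀ i ∉ insert u s, f i = 0) ∧ f u = 1 ∧ cartanForm G f ≤ 1 := by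
  obtain ⟨f, hf, hfs, hfy, hq⟩ := hs y hy
  refine ⟨f + Pi.single u 1, add_nonneg hf (Pi.single_nonneg.2 zero_le_one), fun i hi => ?_, ?_, ?_⟩
  · obtain ⟨hiu, his⟩ := not_or.1 (Finset.mem_insert.not.1 hi)
    simp [hfs i his, hiu]
  · simp [hfs u hu]
  · linarith [cartanForm_add_single_le hf hadj.symm (hfs u hu) zero_le_one]

lemma IsSaturated.insert {s : Finset V} (hs : IsSaturated G s) {y u : V} (hy : y ∈ s)
    (hu : u ∉ s) (hadj : G.Adj y u) : IsSaturated G (insert u s) := by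
  intro z hz
  obtain rfl | hzs := Finset.mem_insert.1 hz
  · obtain ⟨f, hf, hfs, hfz, hq⟩ := hs.exists_extension hy hu hadj
    exact ⟨f, hf, hfs, hfz.ge, hq⟩
  · obtain ⟨f, hf, hfs, hfz, hq⟩ := hs z hzs
    exact ⟨f, hf, fun i hi => hfs i fun his => hi (Finset.mem_insert_of_mem his), hfz, hq⟩

lemma IsSaturated.det_le_det_principalBlock (hG : IsDynkin G) {s : Finset V}
    (hs : IsSaturated G s) (hne : s.Nonempty) :
    (graphCartanMatrix ℝ G).det ≤ (principalBlock (graphCartanMatrix ℝ G) s).det := by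
  set C := graphCartanMatrix ℝ G
  let P : Finset V → Prop := fun t =>
    IsSaturated G t ∧ (principalBlock C t).det ≤ (principalBlock C s).det
  obtain ⟨t, hst, ⟨ht, hdet⟩, hmax⟩ := Finite.exists_le_maximal (p := P) ⟨hs, le_rfl⟩
  obtain rfl | htu := eq_or_ne t Finset.univ
  · have huniv : principalBlock C Finset.univ = C := by
      ext i j
      simp [principalBlock]
    rwa [huniv] at hdet
  obtain ⟨y, hy, u, hu, hadj⟩ := exists_adj_mem_notMem hG.connected (hne.mono hst) htu
  obtain ⟨f, -, hfs, hfu, hq⟩ := ht.exists_extension hy hu hadj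
  have hle : (principalBlock C (Insert.insert u t)).det ≤ (principalBlock C t).det :=
    (det_principalBlock_insert_le hG.posDef hu hfs hfu).trans
      (mul_le_of_le_one_left (principalBlock_posDef hG.posDef t).det_pos.le hq)
  exact absurd (hmax ⟨ht.insert hy hu hadj, hle.trans hdet⟩ (Finset.subset_insert u t)
    (Finset.mem_insert_self u t)) hu

lemma exists_branch_vector {x a b c : V} (ha : G.Adj x a) (hb : G.Adj x b) (hc : G.Adj x c)
    (hab : a ≠ b) (hac : a ≠ c) (hbc : b ≠ c) :
    ∃ f : V → ℝ, 0 ≤ f ∧ (∀ i ∉ ({x, a, b, c} : Finset V), f i = 0) ∧ 1 ≤ f x ∧ 1 ≤ f a ∧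
      cartanForm G f ≤ 1 := by
  have hx : (0 : V → ℝ) ≤ Pi.single x 1 := Pi.single_nonneg.2 zero_le_one
  have hxa := add_nonneg hx (Pi.single_nonneg.2 zero_le_one : (0 : V → ℝ) ≤ Pi.single a 1)
  have hxab := add_nonneg hxa (Pi.single_nonneg.2 (by norm_num) : (0 : V → ℝ) ≤ Pi.single b (1 / 2))
  have hqa := cartanForm_add_single_le hx ha.symm (by simp [ha.ne']) (zero_le_one (α := ℝ))
  have hqb := cartanForm_add_single_le hxa hb.symm (by simp [hb.ne', hab.symm])
    (by norm_num : (0 : ℝ) ≤ 1 / 2)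
  have hqc := cartanForm_add_single_le hxab hc.symm (by simp [hc.ne', hac.symm, hbc.symm])
    (by norm_num : (0 : ℝ) ≤ 1 / 2)
  refine ⟨_, add_nonneg hxab (Pi.single_nonneg.2 (by norm_num : (0 : ℝ) ≤ 1 / 2)),
    fun i hi => ?_, ?_, ?_, hqc.trans ?_⟩
  · simp only [Finset.mem_insert, Finset.mem_singleton, not_or] at hi
    simp [hi]
  · simp [ha.ne, hb.ne, hc.ne]
  · simp [ha.ne', hab, hac]
  · simp only [cartanForm_single, Pi.add_apply, Pi.single_eq_same, Pi.single_eq_of_ne ha.ne,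
      Pi.single_eq_of_ne hb.ne, add_zero] at hqa hqb ⊢
    linarith

lemma isSaturated_branch {x a b c : V} (ha : G.Adj x a) (hb : G.Adj x b) (hc : G.Adj x c)
    (hab : a ≠ b) (hac : a ≠ c) (hbc : b ≠ c) : IsSaturated G {x, a, b, c} := by
  obtain ⟨f, hf, hfs, hfx, hfa, hqf⟩ := exists_branch_vector ha hb hc hab hac hbc
  obtain ⟨g, hg, hgs, -, hgb, hqg⟩ := exists_branch_vector hb ha hc hab.symm hbc hac
  obtain ⟨h, hh, hhs, -, hhc, hqh⟩ := exists_branch_vector hc ha hb hac.symm hbc.symm hab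
  intro y hy
  simp only [Finset.mem_insert, Finset.mem_singleton] at hy hfs hgs hhs ⊢
  obtain rfl | rfl | rfl | rfl := hy
  · exact ⟨f, hf, hfs, hfx, hqf⟩
  · exact ⟨f, hf, hfs, hfa, hqf⟩
  · exact ⟨g, hg, fun i hi => hgs i (by tauto), hgb, hqg⟩
  · exact ⟨h, hh, fun i hi => hhs i (by tauto), hhc, hqh⟩

lemma IsDynkin.det_le_of_three_le_degree (hG : IsDynkin G) {x : V} (hx : 3 ≤ G.degree x) :
    (graphCartanMatrix ℤ G).det ≤ 16 := by
  obtain ⟨a, ha, b, hb, c, hc, hab, hac, hbc⟩ :=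
    Finset.two_lt_card.1 (show 2 < (G.neighborFinset x).card from hx)
  rw [SimpleGraph.mem_neighborFinset] at ha hb hc
  set s : Finset V := {x, a, b, c}
  have hdet : (graphCartanMatrix ℝ G).det ≤ 16 := calc
    (graphCartanMatrix ℝ G).det ≤ (principalBlock (graphCartanMatrix ℝ G) s).det :=
      (isSaturated_branch ha hb hc hab hac hbc).det_le_det_principalBlock hG
        (Finset.insert_nonempty x _)
    _ ≤ ∏ i ∈ s, graphCartanMatrix ℝ G i i := det_principalBlock_le_prod hG.posDef s
    _ = 2 ^ s.card := by simp only [graphCartanMatrix_apply_self, Finset.prod_const]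
    _ ≤ 2 ^ 4 := pow_le_pow_right₀ one_le_two Finset.card_le_four
    _ = 16 := by norm_num
  rw [← map_intCast_graphCartanMatrix, ← Int.cast_det] at hdet
  exact_mod_cast hdet

end DynkinGraph

section FundamentalWeight

variable {V : Type*} [Fintype V] [DecidableEq V] {G : SimpleGraph V} [DecidableRel G.Adj]
  {v : V} {w : V → ℝ}

lemma IsDynkin.apply_self_pos (hG : IsDynkin G)
    (hw : graphCartanMatrix ℝ G *ᵥ w = Pi.single v 1) : 0 < w v := by
  have hw0 : w ≠ 0 := by
    rintro rfl
    simpa using congrFun hw v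
  simpa [hw] using (posDef_iff_isSymm_and_forall_pos.1 hG.posDef).2 w hw0

lemma IsDynkin.exists_apply_self_mul_eq_natCast (hG : IsDynkin G)
    (hdet : (graphCartanMatrix ℤ G).det ≤ 16)
    (hw : graphCartanMatrix ℝ G *ᵥ w = Pi.single v 1) :
    ∃ d n : ℕ, 0 < d ∧ d ≤ 16 ∧ w v * d = n := by
  have hcast : (graphCartanMatrix ℝ G).det = (graphCartanMatrix ℤ G).det := by
    rw [← map_intCast_graphCartanMatrix ℝ, ← Int.cast_det]
  have hadj : w v * (graphCartanMatrix ℤ G).det = (graphCartanMatrix ℤ G).adjugate v v := by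
    rw [← hcast, mul_comm, det_mul_apply_eq_adjugate hw v, ← map_intCast_graphCartanMatrix]
    exact (congrFun₂ ((Int.castRingHom ℝ).map_adjugate (graphCartanMatrix ℤ G)) v v).symm
  have hdpos : 0 < (graphCartanMatrix ℤ G).det := by
    exact_mod_cast hcast ▸ hG.posDef.det_pos
  have hnpos : 0 < (graphCartanMatrix ℤ G).adjugate v v := by
    have h := mul_pos (hG.apply_self_pos hw) (Int.cast_pos.2 hdpos)
    rwa [hadj, Int.cast_pos] at h
  lift (graphCartanMatrix ℤ G).det to ℕ using hdpos.le with d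
  lift (graphCartanMatrix ℤ G).adjugate v v to ℕ using hnpos.le with n
  exact ⟨d, n, by omega, by omega, by exact_mod_cast hadj⟩

omit [DecidableEq V] in
lemma exists_sum_neighborFinset_eq_add {i j : V} (hj : G.degree j ≤ 2) (hadj : G.Adj j i)
    (x : V → ℝ) :
    ∃ b, ∑ l ∈ G.neighborFinset j, x l = x i + b ∧ (b = 0 ∨ ∃ l, G.Adj j l ∧ x l = b) := by
  classical
  have hi : i ∈ G.neighborFinset j := (G.mem_neighborFinset j i).2 hadj
  refine ⟨∑ l ∈ (G.neighborFinset j).erase i, x l, (Finset.add_sum_erase _ x hi).symm, ?_⟩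
  have hcard : ((G.neighborFinset j).erase i).card ≤ 1 := by
    rw [Finset.card_erase_of_mem hi, SimpleGraph.card_neighborFinset_eq_degree]
    omega
  obtain hzero | hone := Nat.le_one_iff_eq_zero_or_eq_one.1 hcard
  · left
    rw [Finset.card_eq_zero.1 hzero, Finset.sum_empty]
  · obtain ⟨l, hl⟩ := Finset.card_eq_one.1 hone
    have hmem : l ∈ (G.neighborFinset j).erase i := hl ▸ Finset.mem_singleton_self l
    right
    exact ⟨l, (G.mem_neighborFinset j l).1 (Finset.mem_of_mem_erase hmem), by
      rw [hl, Finset.sum_singleton]⟩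

lemma IsDynkin.apply_le_apply_self (hG : IsDynkin G) (hdeg : ∀ i, G.degree i ≤ 2)
    (hw : graphCartanMatrix ℝ G *ᵥ w = Pi.single v 1) (i : V) : w i ≤ w v := by
  obtain ⟨m, -, hm⟩ := Finset.exists_max_image Finset.univ w ⟨v, Finset.mem_univ v⟩
  replace hm (j : V) : w j ≤ w m := hm j (Finset.mem_univ j)
  by_contra! hvi
  have hvm : w v < w m := hvi.trans_le (hm i)
  let s := Finset.univ.filter fun j => w j = w m
  obtain ⟨y, hy, u, hu, hadj⟩ := exists_adj_mem_notMem hG.connected (s := s)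
    ⟨m, by simp [s]⟩ fun h => hvm.ne (by simpa [s] using h.ge (Finset.mem_univ v))
  simp only [s, Finset.mem_filter, Finset.mem_univ, true_and] at hy hu
  obtain ⟨b, hsum, hb⟩ := exists_sum_neighborFinset_eq_add (hdeg y) hadj w
  have hbm : b ≤ w m := by
    obtain rfl | ⟨l, -, rfl⟩ := hb
    · linarith [hG.apply_self_pos hw]
    · exact hm l
  have hyv : y ≠ v := by
    rintro rfl
    exact hvm.ne hy
  have hharm := congrFun hw y
  rw [graphCartanMatrix_mulVec_apply, Pi.single_eq_of_ne hyv, hsum] at hharm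
  linarith [lt_of_le_of_ne (hm u) hu]

/- Beyond `j` the graph is a chain on which `w` decreases with constant step `w i - w j`, down to
the value zero at the missing neighbour of its end. -/
lemma IsDynkin.exists_natCast_mul_sub_eq (hG : IsDynkin G) (hdeg : ∀ i, G.degree i ≤ 2)
    (hw : graphCartanMatrix ℝ G *ᵥ w = Pi.single v 1) {i j : V} (hadj : G.Adj i j)
    (hji : w j < w i) : ∃ k : ℕ, 0 < k ∧ w i = k * (w i - w j) := by
  induction j using (Finite.wellFounded_of_trans_of_irrefl (InvImage (· < ·) w)).induction
    generalizing i with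
  | _ j ih =>
    have hjv : j ≠ v := by
      rintro rfl
      exact hji.not_ge (hG.apply_le_apply_self hdeg hw i)
    obtain ⟨b, hsum, hb⟩ := exists_sum_neighborFinset_eq_add (hdeg j) hadj.symm w
    have hharm := congrFun hw j
    rw [graphCartanMatrix_mulVec_apply, Pi.single_eq_of_ne hjv, hsum] at hharm
    obtain rfl | ⟨l, hjl, rfl⟩ := hb
    · exact ⟨2, two_pos, by push_cast; linarith⟩
    · have hlj : w l < w j := by linarith
      obtain ⟨k, -, hkj⟩ := ih l hlj hjl hlj
      refine ⟨k + 1, k.succ_pos, ?_⟩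
      rw [show w j - w l = w i - w j by linarith] at hkj
      push_cast
      linarith

lemma IsDynkin.exists_natCast_eq_of_adj (hG : IsDynkin G) (hdeg : ∀ i, G.degree i ≤ 2)
    (hw : graphCartanMatrix ℝ G *ᵥ w = Pi.single v 1) {b : ℝ}
    (hb : b = 0 ∨ ∃ l, G.Adj v l ∧ w l = b) :
    b = w v ∨ ∃ k : ℕ, 0 < k ∧ w v = k * (w v - b) := by
  obtain rfl | ⟨l, hvl, rfl⟩ := hb
  · exact Or.inr ⟨1, one_pos, by simp⟩
  · exact (hG.apply_le_apply_self hdeg hw l).eq_or_lt.imp_right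
      (hG.exists_natCast_mul_sub_eq hdeg hw hvl)

lemma IsDynkin.exists_apply_self_mul_add_eq_mul (hG : IsDynkin G) (hdeg : ∀ i, G.degree i ≤ 2)
    (hw : graphCartanMatrix ℝ G *ᵥ w = Pi.single v 1) :
    (∃ n : ℕ, w v = n) ∨ ∃ k l : ℕ, 0 < k ∧ 0 < l ∧ w v * (k + l) = k * l := by
  obtain ⟨a, b, hsum, ha, hb⟩ : ∃ a b, ∑ l ∈ G.neighborFinset v, w l = a + b ∧
      (a = 0 ∨ ∃ l, G.Adj v l ∧ w l = a) ∧ (b = 0 ∨ ∃ l, G.Adj v l ∧ w l = b) := by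
    obtain h | ⟨i, hi⟩ := (G.neighborFinset v).eq_empty_or_nonempty
    · exact ⟨0, 0, by simp [h]⟩
    · rw [SimpleGraph.mem_neighborFinset] at hi
      obtain ⟨b, hsum, hb⟩ := exists_sum_neighborFinset_eq_add (hdeg v) hi w
      exact ⟨w i, b, hsum, Or.inr ⟨i, hi, rfl⟩, hb⟩
  have hv := congrFun hw v
  rw [graphCartanMatrix_mulVec_apply, Pi.single_eq_same, hsum] at hv
  obtain rfl | ⟨k, hk, hka⟩ := hG.exists_natCast_eq_of_adj hdeg hw ha <;>
    obtain rfl | ⟨l, hl, hlb⟩ := hG.exists_natCast_eq_of_adj hdeg hw hb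
  · linarith
  · exact Or.inl ⟨l, by linear_combination hlb + (l : ℝ) * hv⟩
  · exact Or.inl ⟨k, by linear_combination hka + (k : ℝ) * hv⟩
  · exact Or.inr ⟨k, l, hk, hl, by linear_combination (l : ℝ) * hka + k * hlb + k * l * hv⟩

lemma IsDynkin.apply_self_cases (hG : IsDynkin G)
    (hw : graphCartanMatrix ℝ G *ᵥ w = Pi.single v 1) :
    (∃ d n : ℕ, 0 < d ∧ d ≤ 16 ∧ w v * d = n) ∨
      ∃ k l : ℕ, 0 < k ∧ 0 < l ∧ w v * (k + l) = k * l := by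
  by_cases hdeg : ∀ i, G.degree i ≤ 2
  · refine (hG.exists_apply_self_mul_add_eq_mul hdeg hw).imp_left fun ⟨n, hn⟩ => ?_
    exact ⟨1, n, one_pos, by norm_num, by rw [hn, Nat.cast_one, mul_one]⟩
  · obtain ⟨x, hx⟩ := not_forall.1 hdeg
    exact Or.inl (hG.exists_apply_self_mul_eq_natCast
      (hG.det_le_of_three_le_degree (not_le.1 hx)) hw)

end FundamentalWeight

section ResolutionData

lemma sum_graphCartanMatrix_le_two {V : Type*} [Fintype V] [DecidableEq V] {G : SimpleGraph V}
    [DecidableRel G.Adj] (hG : G.Connected) : ∑ i, ∑ j, graphCartanMatrix ℤ G i j ≤ 2 := by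
  have hrow (i : V) : ∑ j, graphCartanMatrix ℤ G i j = 2 - G.degree i := by
    simpa [mulVec, dotProduct] using graphCartanMatrix_mulVec_apply G (1 : V → ℤ) i
  have hdeg : ∑ i, (G.degree i : ℤ) = 2 * G.edgeFinset.card := by
    exact_mod_cast G.sum_degrees_eq_twice_card_edges
  have hedge : Fintype.card V ≤ G.edgeFinset.card + 1 := by
    simpa only [Nat.card_eq_fintype_card, SimpleGraph.edgeFinset_card]
      using hG.card_vert_le_card_edgeSet_add_one
  simp only [hrow, Finset.sum_sub_distrib, hdeg, Finset.sum_const, Finset.card_univ, nsmul_eq_mul]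
  omega

lemma map_intCast_graphCartanMatrix_add_diagonal_single {V : Type*} [DecidableEq V]
    (G : SimpleGraph V) [DecidableRel G.Adj] (v : V) :
    (graphCartanMatrix ℤ G + diagonal (Pi.single v 1)).map (Int.cast : ℤ → ℝ) =
      graphCartanMatrix ℝ G + diagonal (Pi.single v 1) := by
  rw [← map_intCast_graphCartanMatrix ℝ]
  ext i j
  simp [diagonal_apply, Pi.single_apply, apply_ite (Int.cast : ℤ → ℝ)]

lemma diagonal_single_mulVec {V : Type*} [Fintype V] [DecidableEq V] (v : V) (x : V → ℝ) :
    diagonal (Pi.single v 1) *ᵥ x = x v • Pi.single v 1 := by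
  ext i
  rw [mulVec_diagonal, Pi.smul_apply, smul_eq_mul, Pi.single_apply]
  split_ifs with hi <;> simp [hi]

lemma dotProduct_add_diagonal_single_mulVec {V : Type*} [Fintype V] [DecidableEq V]
    (A : Matrix V V ℝ) (v : V) (x : V → ℝ) :
    x ⬝ᵥ (A + diagonal (Pi.single v 1)) *ᵥ x = x ⬝ᵥ A *ᵥ x + x v ^ 2 := by
  rw [add_mulVec, dotProduct_add, diagonal_single_mulVec, dotProduct_smul, dotProduct_single_one,
    smul_eq_mul, sq]

namespace ResolutionDatum

variable {r : ℕ} (D : ResolutionDatum r)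

/-- The positive definite quadratic form `-M` over the reals. -/
def form : Matrix (Fin r) (Fin r) ℝ :=
  (-D.M).map Int.cast

/-- The degrees `K · A_i` of the canonical divisor as integers, while `ResolutionDatum.c` records
them as rationals. -/
def canonicalDegree (i : Fin r) : ℤ :=
  2 * D.p i - 2 - D.M i i

/-- The dual graph of the exceptional divisor, without its multiplicities and self-intersections. -/
def dualGraph : SimpleGraph (Fin r) :=
  SimpleGraph.fromRel fun i j => 0 < D.M i j

lemma dualGraph_adj {i j : Fin r} : D.dualGraph.Adj i j ↔ i ≠ j ∧ 0 < D.M i j := by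
  rw [dualGraph, SimpleGraph.fromRel_adj, D.symm.apply i j, or_self]

instance : DecidableRel D.dualGraph.Adj :=
  fun _ _ => decidable_of_iff' _ D.dualGraph_adj

lemma form_posDef : D.form.PosDef := by
  refine posDef_iff_isSymm_and_forall_pos.2 ⟨D.symm.neg.map _, fun x hx => ?_⟩
  have hform : D.form = -D.M.map Int.cast := by
    ext i j
    simp [form]
  rw [hform, neg_mulVec, dotProduct_neg, neg_pos]
  exact D.negdef x hx

lemma negK2_eq_dotProduct_s13 {y : Fin r → ℝ} (hy : D.form *ᵥ y = (↑) ∘ D.canonicalDegree) :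
    (D.negK2 : ℝ) = ((↑) ∘ D.canonicalDegree) ⬝ᵥ y := by
  let Q := D.M.map (Int.cast : ℤ → ℚ)
  have hform : (-Q).map ((↑) : ℚ → ℝ) = D.form := by
    ext i j
    simp [form, Q]
  have hc : ((↑) : ℚ → ℝ) ∘ D.c = (↑) ∘ D.canonicalDegree := by
    ext i
    simp [c, canonicalDegree]
  have hdet : IsUnit Q.det := by
    have hne := D.form_posDef.det_pos.ne'
    rw [← hform, ← Rat.cast_det, Rat.cast_ne_zero, det_neg] at hne
    exact (right_ne_zero_of_mul hne).isUnit
  have hz : (-Q) *ᵥ -(Q⁻¹ *ᵥ D.c) = D.c := by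
    rw [neg_mulVec, mulVec_neg, neg_neg, mulVec_mulVec, mul_nonsing_inv _ hdet, one_mulVec]
  have hzreal : D.form *ᵥ ((↑) ∘ (-(Q⁻¹ *ᵥ D.c))) = (↑) ∘ D.canonicalDegree := by
    rw [← hform, ← hc]
    ext i
    rw [Function.comp_apply, ← congrFun hz i]
    exact ((Rat.castHom ℝ).map_mulVec (-Q) _ i).symm
  rw [mulVec_injective_of_isUnit D.form_posDef.isUnit (hy.trans hzreal.symm), ← hc]
  calc (D.negK2 : ℝ) = Rat.castHom ℝ (D.c ⬝ᵥ -(Q⁻¹ *ᵥ D.c)) := by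
        rw [dotProduct_neg]
        rfl
    _ = _ := (Rat.castHom ℝ).map_dotProduct _ _

lemma canonicalDegree_nonneg (i : Fin r) : 0 ≤ D.canonicalDegree i := by
  have hdiag : 0 < -D.M i i := Int.cast_pos.1 (D.form_posDef.diag_pos (i := i))
  rw [canonicalDegree]
  obtain hp | hp := eq_or_ne (D.p i) 0
  · have := D.diag_le_neg_two i hp
    omega
  · omega

variable {D}

lemma sq_dotProduct_canonicalDegree_lt (h : (D.negK2 : ℝ) < 1) {x : Fin r → ℝ} (hx : x ≠ 0) :
    (x ⬝ᵥ ((↑) ∘ D.canonicalDegree)) ^ 2 < x ⬝ᵥ D.form *ᵥ x := by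
  obtain ⟨y, hy⟩ := exists_mulVec_eq_of_posDef D.form_posDef ((↑) ∘ D.canonicalDegree)
  have hpos := (posDef_iff_isSymm_and_forall_pos.1 D.form_posDef).2 x hx
  calc (x ⬝ᵥ ((↑) ∘ D.canonicalDegree)) ^ 2
      ≤ (x ⬝ᵥ D.form *ᵥ x) * (((↑) ∘ D.canonicalDegree) ⬝ᵥ y) :=
        sq_dotProduct_le_of_posDef D.form_posDef hy x
    _ < x ⬝ᵥ D.form *ᵥ x := mul_lt_of_lt_one_right hpos (D.negK2_eq_dotProduct_s13 hy ▸ h)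

variable (D) in
lemma neg_M_apply_le (i j : Fin r) : (-D.M) i j ≤
    (graphCartanMatrix ℤ D.dualGraph + diagonal fun k => D.canonicalDegree k - 2 * D.p k) i j := by
  rw [Matrix.add_apply, Matrix.neg_apply]
  obtain rfl | hij := eq_or_ne i j
  · rw [graphCartanMatrix_apply_self, diagonal_apply_eq, canonicalDegree]
    omega
  · have := D.offdiag_nonneg i j hij
    rw [graphCartanMatrix_apply_of_ne ℤ hij, diagonal_apply_ne _ hij]
    simp only [dualGraph_adj]
    split_ifs <;> omega

lemma neg_M_eq_graphCartanMatrix_add_diagonal (hp : ∀ i, D.p i = 0)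
    (hM : ∀ i j, i ≠ j → D.M i j ≤ 1) :
    -D.M = graphCartanMatrix ℤ D.dualGraph + diagonal D.canonicalDegree := by
  ext i j
  rw [Matrix.add_apply, Matrix.neg_apply]
  obtain rfl | hij := eq_or_ne i j
  · rw [graphCartanMatrix_apply_self, diagonal_apply_eq, canonicalDegree, hp]
    omega
  · have := D.offdiag_nonneg i j hij
    have := hM i j hij
    rw [graphCartanMatrix_apply_of_ne ℤ hij, diagonal_apply_ne _ hij]
    simp only [dualGraph_adj]
    split_ifs <;> omega

lemma genus_eq_zero_and_sum_canonicalDegree_le_one (h : (D.negK2 : ℝ) < 1) :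
    (∀ i, D.p i = 0) ∧ ∑ i, D.canonicalDegree i ≤ 1 := by
  have : Nonempty (Fin r) := D.connected.nonempty
  have hlt : (∑ i, D.canonicalDegree i) ^ 2 < ∑ i, ∑ j, (-D.M) i j := by
    have hreal := sq_dotProduct_canonicalDegree_lt h (one_ne_zero (α := Fin r → ℝ))
    simp only [one_dotProduct, mulVec, dotProduct_one, form, Function.comp_apply,
      map_apply] at hreal
    exact_mod_cast hreal
  have hle : ∑ i, ∑ j, (-D.M) i j ≤ 2 + ∑ i, D.canonicalDegree i - 2 * ∑ i, (D.p i : ℤ) := calc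
    ∑ i, ∑ j, (-D.M) i j ≤ ∑ i, ∑ j, (graphCartanMatrix ℤ D.dualGraph +
        diagonal fun k => D.canonicalDegree k - 2 * D.p k) i j :=
      Finset.sum_le_sum fun i _ => Finset.sum_le_sum fun j _ => D.neg_M_apply_le i j
    _ = ∑ i, ∑ j, graphCartanMatrix ℤ D.dualGraph i j + ∑ i, D.canonicalDegree i
        - 2 * ∑ i, (D.p i : ℤ) := by
      simp only [Matrix.add_apply, diagonal_apply, Finset.sum_add_distrib, Finset.sum_ite_eq,
        Finset.mem_univ, if_true, Finset.sum_sub_distrib, ← Finset.mul_sum]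
      ring
    _ ≤ _ := by gcongr; exact sum_graphCartanMatrix_le_two D.connected
  have hdeg : 0 ≤ ∑ i, D.canonicalDegree i :=
    Finset.sum_nonneg fun i _ => D.canonicalDegree_nonneg i
  have hgenus : 0 ≤ ∑ i, (D.p i : ℤ) := Finset.sum_nonneg fun i _ => Int.natCast_nonneg _
  have hgenus0 : ∑ i, (D.p i : ℤ) = 0 := by nlinarith
  refine ⟨fun i => ?_, by nlinarith⟩
  exact_mod_cast (Finset.sum_eq_zero_iff_of_nonneg fun i _ => Int.natCast_nonneg _).1 hgenus0 i
    (Finset.mem_univ i)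

lemma M_apply_le_one (h : (D.negK2 : ℝ) < 1) {i j : Fin r} (hij : i ≠ j) : D.M i j ≤ 1 := by
  have hgenus := (genus_eq_zero_and_sum_canonicalDegree_le_one h).1
  set d := D.canonicalDegree i + D.canonicalDegree j with hd
  have hlt : d ^ 2 < d + 4 - 2 * D.M i j := by
    have hne : (Pi.single i 1 + Pi.single j 1 : Fin r → ℝ) ≠ 0 := fun h0 => by
      simpa [hij] using congrFun h0 i
    have hreal := sq_dotProduct_canonicalDegree_lt h hne
    rw [add_dotProduct_mulVec_add (posDef_iff_isSymm_and_forall_pos.1 D.form_posDef).1] at hreal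
    simp only [add_dotProduct, single_dotProduct, one_mul, mulVec_single_one, col_apply,
      Function.comp_apply, form, map_apply, Matrix.neg_apply, D.symm.apply i j] at hreal
    have hint : d ^ 2 < -D.M i i + 2 * -D.M i j + -D.M j j := by exact_mod_cast hreal
    simp only [hd, canonicalDegree, hgenus] at hint ⊢
    linarith
  have hsq : d ≤ d ^ 2 := Int.le_self_sq d
  linarith

lemma canonicalDegree_eq_zero_or_single (h : (D.negK2 : ℝ) < 1) :
    D.canonicalDegree = 0 ∨ ∃ v, D.canonicalDegree = Pi.single v 1 := by
  have hsum := (genus_eq_zero_and_sum_canonicalDegree_le_one h).2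
  refine or_iff_not_imp_left.2 fun hne => ?_
  obtain ⟨v, hv : D.canonicalDegree v ≠ 0⟩ := Function.ne_iff.1 hne
  have hv_pos := (D.canonicalDegree_nonneg v).lt_of_ne' hv
  refine ⟨v, funext fun i => ?_⟩
  obtain rfl | hiv := eq_or_ne i v
  · have := Finset.single_le_sum (fun j _ => D.canonicalDegree_nonneg j) (Finset.mem_univ i)
    rw [Pi.single_eq_same]
    omega
  · have := Finset.add_le_sum (fun j _ => D.canonicalDegree_nonneg j) (Finset.mem_univ i)
      (Finset.mem_univ v) hiv
    have := D.canonicalDegree_nonneg i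
    rw [Pi.single_eq_of_ne hiv]
    omega

section OneDefect

variable {G : SimpleGraph (Fin r)} [DecidableRel G.Adj] {v : Fin r}

lemma form_eq_of_neg_M_eq (hM : -D.M = graphCartanMatrix ℤ G + diagonal (Pi.single v 1)) :
    D.form = graphCartanMatrix ℝ G + diagonal (Pi.single v 1) := by
  rw [form, hM, map_intCast_graphCartanMatrix_add_diagonal_single]

lemma comp_canonicalDegree_eq_single (hc : D.canonicalDegree = Pi.single v 1) :
    ((↑) ∘ D.canonicalDegree : Fin r → ℝ) = Pi.single v 1 := by
  ext i
  rw [Function.comp_apply, hc, Pi.single_apply, Pi.single_apply, Int.cast_ite, Int.cast_one,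
    Int.cast_zero]

lemma negK2_eq_div_of_form_eq (hform : D.form = graphCartanMatrix ℝ G + diagonal (Pi.single v 1))
    (hc : D.canonicalDegree = Pi.single v 1) {w : Fin r → ℝ}
    (hw : graphCartanMatrix ℝ G *ᵥ w = Pi.single v 1) (hwv : 0 < w v) :
    (D.negK2 : ℝ) = w v / (1 + w v) := by
  have hcast := comp_canonicalDegree_eq_single hc
  have hy : D.form *ᵥ ((1 + w v)⁻¹ • w) = (↑) ∘ D.canonicalDegree := by
    have hsum : Pi.single v 1 + w v • Pi.single v 1 = (1 + w v) • (Pi.single v 1 : Fin r → ℝ) := by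
      rw [add_smul, one_smul]
    rw [hcast, hform, mulVec_smul, add_mulVec, hw, diagonal_single_mulVec, hsum,
      inv_smul_smul₀ (by positivity)]
  rw [D.negK2_eq_dotProduct_s13 hy, hcast, single_one_dotProduct, Pi.smul_apply, smul_eq_mul,
    inv_mul_eq_div]

lemma isDynkin_of_form_eq (h : (D.negK2 : ℝ) < 1) (hG : G.Connected)
    (hform : D.form = graphCartanMatrix ℝ G + diagonal (Pi.single v 1))
    (hc : D.canonicalDegree = Pi.single v 1) : IsDynkin G := by
  refine ⟨hG, posDef_iff_isSymm_and_forall_pos.2 ⟨isSymm_graphCartanMatrix ℝ G, fun x hx => ?_⟩⟩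
  have hlt := sq_dotProduct_canonicalDegree_lt h hx
  rw [comp_canonicalDegree_eq_single hc, dotProduct_single_one, hform,
    dotProduct_add_diagonal_single_mulVec] at hlt
  linarith

end OneDefect

lemma negK2_cases (h : (D.negK2 : ℝ) < 1) : (D.negK2 : ℝ) = 0 ∨
    ∃ v w, IsDynkin D.dualGraph ∧ graphCartanMatrix ℝ D.dualGraph *ᵥ w = Pi.single v 1 ∧
      (D.negK2 : ℝ) = w v / (1 + w v) := by
  have hM := neg_M_eq_graphCartanMatrix_add_diagonal
    (genus_eq_zero_and_sum_canonicalDegree_le_one h).1 fun i j => M_apply_le_one h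
  obtain hc | ⟨v, hc⟩ := canonicalDegree_eq_zero_or_single h
  · left
    have hy : D.form *ᵥ 0 = (↑) ∘ D.canonicalDegree := by
      ext i
      simp [hc]
    rw [D.negK2_eq_dotProduct_s13 hy, dotProduct_zero]
  · right
    have hform := form_eq_of_neg_M_eq (hc ▸ hM)
    have hG : IsDynkin D.dualGraph := isDynkin_of_form_eq h D.connected hform hc
    obtain ⟨w, hw⟩ := exists_mulVec_eq_of_posDef hG.posDef (Pi.single v 1)
    exact ⟨v, w, hG, hw, negK2_eq_div_of_form_eq hform hc hw (hG.apply_self_pos hw)⟩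

end ResolutionDatum

lemma exists_eq_div_of_mem_negK2Set {s : ℝ} (hs : s ∈ negK2Set) (hs1 : s < 1) :
    (∃ d n : ℕ, d ≤ 16 ∧ s = n / (n + d)) ∨
      ∃ k l : ℕ, 0 < k ∧ 0 < l ∧ s = k * l / (k * l + k + l) := by
  obtain ⟨r, -, D, rfl⟩ := hs
  obtain hzero | ⟨v, w, hG, hw, heq⟩ := ResolutionDatum.negK2_cases hs1
  · exact .inl ⟨0, 0, Nat.zero_le 16, by simpa using hzero⟩
  have hwv := hG.apply_self_pos hw
  obtain ⟨d, n, hd, hd16, hn⟩ | ⟨k, l, hk, hl, hkl⟩ := hG.apply_self_cases hw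
  · refine .inl ⟨d, n, hd16, ?_⟩
    rw [heq, ← hn]
    field_simp
    ring
  · refine .inr ⟨k, l, hk, hl, ?_⟩
    rw [heq, ← hkl]
    field_simp
    ring

end ResolutionData

section Realization

namespace IsDynkin

variable {r : ℕ} {G : SimpleGraph (Fin r)} [DecidableRel G.Adj]

/-- The resolution datum of rational curves with dual graph `G` whose self-intersections are all
`-2`, except for a `-3` at the vertex `v`. -/
def resolutionDatum (hG : IsDynkin G) (v : Fin r) : ResolutionDatum r where
  M := -(graphCartanMatrix ℤ G + diagonal (Pi.single v 1))
  p := 0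
  symm := ((isSymm_graphCartanMatrix ℤ G).add (isSymm_diagonal _)).neg
  negdef x hx := by
    have hpos := (posDef_iff_isSymm_and_forall_pos.1 hG.posDef).2 x hx
    rw [Matrix.map_neg _ Int.cast_neg, map_intCast_graphCartanMatrix_add_diagonal_single,
      neg_mulVec, dotProduct_neg, dotProduct_add_diagonal_single_mulVec]
    linarith [sq_nonneg (x v)]
  offdiag_nonneg i j hij := by
    rw [Matrix.neg_apply, Matrix.add_apply, graphCartanMatrix_apply_of_ne ℤ hij,
      diagonal_apply_ne _ hij]
    split_ifs <;> simp
  diag_le_neg_two i _ := by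
    have : 0 ≤ (Pi.single v 1 : Fin r → ℤ) i :=
      (Pi.single_nonneg (α := fun _ => ℤ)).2 zero_le_one i
    rw [Matrix.neg_apply, Matrix.add_apply, graphCartanMatrix_apply_self, diagonal_apply_eq]
    linarith
  connected := by
    convert hG.connected
    have hadj_iff {i j : Fin r} (hij : i ≠ j) :
        0 < (-(graphCartanMatrix ℤ G + diagonal (Pi.single v 1)) : Matrix _ _ ℤ) i j ↔
          G.Adj i j := by
      rw [Matrix.neg_apply, Matrix.add_apply, graphCartanMatrix_apply_of_ne ℤ hij,
        diagonal_apply_ne _ hij]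
      split_ifs with hadj <;> simp [hadj]
    ext i j
    rw [SimpleGraph.fromRel_adj]
    refine ⟨fun ⟨hij, h⟩ => ?_, fun h => ⟨h.ne, .inl ((hadj_iff h.ne).2 h)⟩⟩
    exact h.elim (hadj_iff hij).1 fun h => ((hadj_iff hij.symm).1 h).symm

lemma div_mem_negK2Set (hG : IsDynkin G) {v : Fin r} {w : Fin r → ℝ}
    (hw : graphCartanMatrix ℝ G *ᵥ w = Pi.single v 1) : w v / (1 + w v) ∈ negK2Set := by
  have hM : -(hG.resolutionDatum v).M = graphCartanMatrix ℤ G + diagonal (Pi.single v 1) :=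
    neg_neg _
  have hc : (hG.resolutionDatum v).canonicalDegree = Pi.single v 1 := by
    ext i
    simp only [resolutionDatum, ResolutionDatum.canonicalDegree, Pi.zero_apply, Matrix.neg_apply,
      Matrix.add_apply, graphCartanMatrix_apply_self, diagonal_apply_eq]
    push_cast
    ring
  exact ⟨r, v.pos, hG.resolutionDatum v, (ResolutionDatum.negK2_eq_div_of_form_eq
    (ResolutionDatum.form_eq_of_neg_M_eq hM) hc hw (hG.apply_self_pos hw)).symm⟩

end IsDynkin

lemma posDef_of_mulVec_pos {ι : Type*} [Fintype ι] {A : Matrix ι ι ℝ} (hA : A.IsSymm)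
    (hoff : ∀ i j, i ≠ j → A i j ≤ 0) {u : ι → ℝ} (hu : ∀ i, 0 < u i)
    (hAu : ∀ i, 0 < (A *ᵥ u) i) : A.PosDef := by
  refine posDef_iff_isSymm_and_forall_pos.2 ⟨hA, fun x hx => ?_⟩
  have hterm (i j : ι) :
      u i * A i j * u j * ((x i / u i) ^ 2 + (x j / u j) ^ 2) / 2 ≤ x i * (A i j * x j) := by
    have hprod : x i * (A i j * x j) = u i * A i j * u j * (x i / u i * (x j / u j)) := by
      have := (hu i).ne'
      have := (hu j).ne'
      field_simp
    rw [hprod]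
    obtain rfl | hij := eq_or_ne i j
    · exact le_of_eq (by ring)
    · have hneg : u i * A i j * u j ≤ 0 :=
        mul_nonpos_of_nonpos_of_nonneg (mul_nonpos_of_nonneg_of_nonpos (hu i).le (hoff i j hij))
          (hu j).le
      nlinarith [mul_nonpos_of_nonpos_of_nonneg hneg (sq_nonneg (x i / u i - x j / u j))]
  obtain ⟨i, hi⟩ := Function.ne_iff.1 hx
  calc 0 < ∑ i, u i * (A *ᵥ u) i * (x i / u i) ^ 2 := by
        refine Finset.sum_pos' (fun i _ => ?_) ⟨i, Finset.mem_univ i, ?_⟩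
        · exact mul_nonneg (mul_pos (hu i) (hAu i)).le (sq_nonneg _)
        · exact mul_pos (mul_pos (hu i) (hAu i)) (sq_pos_of_ne_zero (div_ne_zero hi (hu i).ne'))
    _ = ∑ i, ∑ j, u i * A i j * u j * (x i / u i) ^ 2 := by
        simp only [mulVec, dotProduct, Finset.mul_sum, Finset.sum_mul, mul_assoc]
    _ = ∑ i, ∑ j, u i * A i j * u j * ((x i / u i) ^ 2 + (x j / u j) ^ 2) / 2 := by
        have hswap : ∑ i, ∑ j, u i * A i j * u j * (x j / u j) ^ 2 =
            ∑ i, ∑ j, u i * A i j * u j * (x i / u i) ^ 2 := by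
          rw [Finset.sum_comm]
          refine Finset.sum_congr rfl fun i _ => Finset.sum_congr rfl fun j _ => ?_
          rw [hA.apply i j]
          ring
        simp only [mul_add, add_div, Finset.sum_add_distrib, ← Finset.sum_div, hswap, add_halves]
    _ ≤ ∑ i, ∑ j, x i * (A i j * x j) :=
        Finset.sum_le_sum fun i _ => Finset.sum_le_sum fun j _ => hterm i j
    _ = x ⬝ᵥ A *ᵥ x := by simp only [mulVec, dotProduct, Finset.mul_sum]

section PathGraph

open SimpleGraph

lemma graphCartanMatrix_pathGraph_mulVec_apply {n : ℕ} [DecidableRel (pathGraph n).Adj]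
    {X : ℕ → ℝ} (h0 : X 0 = 0) (hn : X (n + 1) = 0) (i : Fin n) :
    (graphCartanMatrix ℝ (pathGraph n) *ᵥ fun j => X (j + 1)) i =
      2 * X (i + 1) - X i - X (i + 2) := by
  have hprev : ∑ j : Fin n, (if (i : ℕ) = j + 1 then X (j + 1) else 0) = X i := by
    rw [Fin.sum_univ_eq_sum_range fun j => if (i : ℕ) = j + 1 then X (j + 1) else 0]
    obtain ⟨_ | m, hi⟩ := i
    · simp [h0]
    · simp only [Nat.add_right_cancel_iff]
      rw [Finset.sum_ite_eq, if_pos (Finset.mem_range.2 (by omega))]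
  have hnext : ∑ j : Fin n, (if (i : ℕ) + 1 = j then X (j + 1) else 0) = X (i + 2) := by
    rw [Fin.sum_univ_eq_sum_range fun j => if (i : ℕ) + 1 = j then X (j + 1) else 0,
      Finset.sum_ite_eq]
    split_ifs with hi
    · rfl
    · rw [← hn]
      congr 1
      rw [Finset.mem_range] at hi
      omega
  have hsum : ∑ j ∈ (pathGraph n).neighborFinset i, X (j + 1) = X i + X (i + 2) := by
    rw [← hprev, ← hnext, ← Finset.sum_add_distrib, neighborFinset_eq_filter, Finset.sum_filter]
    refine Finset.sum_congr rfl fun j _ => ?_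
    simp only [pathGraph_adj]
    split_ifs <;> first | omega | simp
  rw [graphCartanMatrix_mulVec_apply, hsum]
  ring

lemma isDynkin_pathGraph {n : ℕ} [DecidableRel (pathGraph n).Adj] (hn : 0 < n) :
    IsDynkin (pathGraph n) := by
  refine ⟨?_, posDef_of_mulVec_pos (isSymm_graphCartanMatrix ℝ _) (fun i j hij => ?_)
    (u := fun i => ((i + 1 : ℕ) : ℝ) * (n + 1 - (i + 1 : ℕ))) (fun i => ?_) fun i => ?_⟩
  · obtain ⟨m, rfl⟩ := Nat.exists_eq_add_one.2 hn
    exact pathGraph_connected m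
  · rw [graphCartanMatrix_apply_of_ne ℝ hij]
    split_ifs <;> norm_num
  · have : (i + 1 : ℝ) ≤ n := by exact_mod_cast i.isLt
    push_cast
    exact mul_pos (by positivity) (by linarith)
  · rw [graphCartanMatrix_pathGraph_mulVec_apply (X := fun j => (j : ℝ) * (n + 1 - j))
      (by simp) (by simp)]
    push_cast
    linarith

lemma exists_pathGraph_mulVec_eq_single {k l : ℕ} (hk : 0 < k) (hl : 0 < l)
    [DecidableRel (pathGraph (k + l - 1)).Adj] :
    ∃ v w, graphCartanMatrix ℝ (pathGraph (k + l - 1)) *ᵥ w = Pi.single v 1 ∧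
      w v = k * l / (k + l) := by
  let X (j : ℕ) : ℝ := if j ≤ k then j * l / (k + l) else k * (k + l - j) / (k + l)
  have hX_le {j : ℕ} (hj : j ≤ k) : X j = j * l / (k + l) := if_pos hj
  have hX_ge {j : ℕ} (hj : k ≤ j) : X j = k * (k + l - j) / (k + l) := by
    obtain rfl | hlt := hj.eq_or_lt
    · rw [hX_le le_rfl, add_sub_cancel_left]
    · exact if_neg hlt.not_ge
  have hX0 : X 0 = 0 := by simp [hX_le]
  have hXkl : X (k + l - 1 + 1) = 0 := by
    rw [Nat.sub_add_cancel (by omega), hX_ge (by omega)]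
    simp
  refine ⟨⟨k - 1, by omega⟩, fun j => X (j + 1), funext fun i => ?_, ?_⟩
  · rw [graphCartanMatrix_pathGraph_mulVec_apply hX0 hXkl]
    obtain hi | hi | hi := lt_trichotomy (i + 1 : ℕ) k
    · rw [Pi.single_eq_of_ne (Fin.ne_of_val_ne (by dsimp only; omega)), hX_le hi.le,
        hX_le (by omega), hX_le (by omega)]
      push_cast
      ring
    · rw [Pi.single_apply, if_pos (Fin.ext (Nat.eq_sub_of_add_eq hi)), hX_le hi.le,
        hX_le (by omega), hX_ge (by omega), ← show (i + 1 : ℝ) = k by exact_mod_cast hi]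
      push_cast
      field_simp
      ring
    · rw [Pi.single_eq_of_ne (Fin.ne_of_val_ne (by dsimp only; omega)), hX_ge hi.le,
        hX_ge (by omega), hX_ge (by omega)]
      push_cast
      ring
  · dsimp only
    rw [Nat.sub_add_cancel hk, hX_le le_rfl]

end PathGraph

lemma mul_div_mem_negK2Set {k l : ℕ} (hk : 0 < k) (hl : 0 < l) :
    (k * l / (k * l + k + l) : ℝ) ∈ negK2Set := by
  classical
  obtain ⟨v, w, hw, hwv⟩ := exists_pathGraph_mulVec_eq_single hk hl
  convert (isDynkin_pathGraph (by omega)).div_mem_negK2Set hw using 1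
  rw [hwv]
  field_simp
  ring

end Realization

section AccumulationPoints

open Filter Topology

lemma exists_accPt_of_accPt_biUnion {X ι : Type*} [TopologicalSpace X] {x : X} {s : Finset ι}
    {A : ι → Set X} (h : AccPt x (𝓟 (⋃ i ∈ s, A i))) : ∃ i ∈ s, AccPt x (𝓟 (A i)) := by
  by_contra! hnot
  simp only [accPt_iff_frequently, not_frequently] at h hnot
  refine h (((eventually_all_finset s).2 hnot).mono fun y hy ⟨hne, hmem⟩ => ?_)
  obtain ⟨i, hi, hyi⟩ := Set.mem_iUnion₂.1 hmem
  exact hy i hi ⟨hne, hyi⟩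

lemma eq_of_accPt_range_of_tendsto {X : Type*} [TopologicalSpace X] [T2Space X] {u : ℕ → X}
    {a b : X} (hb : AccPt b (𝓟 (Set.range u))) (hu : Tendsto u atTop (𝓝 a)) : b = a := by
  by_contra hne
  obtain ⟨U, V, hU, hV, hbU, haV, hUV⟩ := t2_separation hne
  obtain ⟨N, hN⟩ := eventually_atTop.1 (hu.eventually (hV.mem_nhds haV))
  refine Set.Infinite.of_accPt (hb.nhds_inter (hU.mem_nhds hbU))
    (((Set.finite_Iio N).image u).subset ?_)
  rintro _ ⟨hnU, n, rfl⟩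
  exact ⟨n, not_le.1 fun hn => hUV.le_bot ⟨hnU, hN n hn⟩, rfl⟩

lemma tendsto_natCast_mul_div_atTop (k : ℕ) :
    Tendsto (fun l : ℕ => (k * l / (k * l + k + l) : ℝ)) atTop (𝓝 (k / (k + 1))) := by
  have h := (tendsto_natCast_div_add_atTop (k / (k + 1) : ℝ)).const_mul (k / (k + 1) : ℝ)
  rw [mul_one] at h
  refine h.congr fun l => ?_
  rw [div_mul_div_comm, mul_add, mul_div_cancel₀ _ (by positivity)]
  ring

lemma lt_two_div_of_mul_div_lt {k l : ℕ} (hk : 0 < k) (hkl : k ≤ l) {β : ℝ} (hβ : β < 1)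
    (h : (k * l / (k * l + k + l) : ℝ) < β) : (k : ℝ) < 2 / (1 - β) := by
  have : (0 : ℝ) < k := Nat.cast_pos.2 hk
  have hkl' : (k : ℝ) ≤ l := Nat.cast_le.2 hkl
  have hle : (k / (k + 2) : ℝ) ≤ k * l / (k * l + k + l) := by
    rw [div_le_div_iff₀ (by positivity) (by positivity)]
    nlinarith
  have hlt := hle.trans_lt h
  rw [div_lt_iff₀ (by positivity)] at hlt
  rw [lt_div_iff₀ (sub_pos.2 hβ)]
  linarith

lemma Iio_inter_negK2Set_subset {β : ℝ} (hβ : β < 1) : Set.Iio β ∩ negK2Set ⊆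
    (⋃ d ∈ Finset.Iic (16 : ℕ), Set.range fun n : ℕ => (n / (n + d) : ℝ)) ∪
      ⋃ k ∈ Finset.Icc 1 ⌈2 / (1 - β)⌉₊,
        Set.range fun l : ℕ => (k * l / (k * l + k + l) : ℝ) := by
  rintro s ⟨hsβ : s < β, hs⟩
  obtain ⟨d, n, hd, rfl⟩ | ⟨k, l, hk, hl, rfl⟩ := exists_eq_div_of_mem_negK2Set hs (hsβ.trans hβ)
  · left
    exact Set.mem_iUnion₂.2 ⟨d, Finset.mem_Iic.2 hd, n, rfl⟩
  right
  wlog hkl : k ≤ l generalizing k l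
  · rw [show (k * l / (k * l + k + l) : ℝ) = l * k / (l * k + l + k) by ring] at *
    exact this l k hl hk ‹_› ‹_› (le_of_not_ge hkl)
  have hkN : k ≤ ⌈2 / (1 - β)⌉₊ :=
    Nat.cast_le.1 ((lt_two_div_of_mul_div_lt hk hkl hβ hsβ).le.trans (Nat.le_ceil _))
  exact Set.mem_iUnion₂.2 ⟨k, Finset.mem_Icc.2 ⟨hk, hkN⟩, l, rfl⟩

lemma eq_div_of_accPt_negK2Set {α : ℝ} (hα : α < 1) (h : AccPt α (𝓟 negK2Set)) :
    ∃ m : ℕ, 0 < m ∧ α = m / (m + 1) := by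
  obtain ⟨β, hαβ, hβ⟩ := exists_between hα
  have hacc := (h.nhds_inter (Iio_mem_nhds hαβ)).mono
    (principal_mono.2 (Iio_inter_negK2Set_subset hβ))
  rw [← sup_principal, accPt_sup] at hacc
  obtain hbounded | hchain := hacc
  · obtain ⟨d, -, hd⟩ := exists_accPt_of_accPt_biUnion hbounded
    exact absurd (eq_of_accPt_range_of_tendsto hd (tendsto_natCast_div_add_atTop _)) hα.ne
  · obtain ⟨m, hm, hacc⟩ := exists_accPt_of_accPt_biUnion hchain
    exact ⟨m, (Finset.mem_Icc.1 hm).1,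
      eq_of_accPt_range_of_tendsto hacc (tendsto_natCast_mul_div_atTop m)⟩

lemma accPt_negK2Set_div {m : ℕ} (hm : 0 < m) : AccPt (m / (m + 1) : ℝ) (𝓟 negK2Set) := by
  rw [accPt_iff_frequently]
  refine (tendsto_natCast_mul_div_atTop m).frequently (Eventually.frequently ?_)
  filter_upwards [eventually_gt_atTop 0] with l hl
  refine ⟨ne_of_lt ?_, mul_div_mem_negK2Set hm hl⟩
  have : (0 : ℝ) < m := Nat.cast_pos.2 hm
  rw [div_lt_div_iff₀ (by positivity) (by positivity)]
  nlinarith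

lemma accPt_one_negK2Set : AccPt 1 (𝓟 negK2Set) :=
  (isClosed_derivedSet negK2Set).mem_of_tendsto (tendsto_natCast_div_add_atTop 1)
    ((eventually_gt_atTop 0).mono fun _ => accPt_negK2Set_div)

lemma accPt_principal_iff_forall_abs_lt {s : Set ℝ} {α : ℝ} : AccPt α (𝓟 s) ↔
    ∀ ε : ℝ, 0 < ε → ∃ x ∈ s, x ≠ α ∧ |x - α| < ε := by
  simp only [accPt_iff_frequently, Metric.nhds_basis_ball.frequently_iff, Metric.mem_ball,
    Real.dist_eq]
  grind

theorem negK2Set_accumulation_in_unit_interval_general {α : ℝ} (hα : α ≤ 1) :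
    AccPt α (𝓟 negK2Set) ↔ α = 1 ∨ ∃ m : ℕ, 0 < m ∧ α = m / (m + 1) := by
  constructor
  · intro h
    exact hα.eq_or_lt.imp_right fun hlt => eq_div_of_accPt_negK2Set hlt h
  · rintro (rfl | ⟨m, hm, rfl⟩)
    · exact accPt_one_negK2Set
    · exact accPt_negK2Set_div hm

end AccumulationPoints

/-- **Proposition 2.8.** The accumulation points of the set of values `-K²` in `[0,1]` are
exactly `1` and `m/(m+1)` for positive integers `m`. -/
theorem negK2Set_accumulation_in_unit_interval (α : ℝ) (h0 : 0 ≤ α) (h1 : α ≤ 1) :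
    (∀ ε : ℝ, 0 < ε → ∃ s ∈ negK2Set, s ≠ α ∧ |s - α| < ε) ↔
      (α = 1 ∨ ∃ m : ℕ, 0 < m ∧ α = (m : ℝ) / ((m : ℝ) + 1)) :=
  accPt_principal_iff_forall_abs_lt.symm.trans
    (negK2Set_accumulation_in_unit_interval_general h1)
end

section
/- Let n, s, t ∈ ℕ and let M be the symmetric integer matrix of size N = 1 + n + s + t indexed by a central vertex v and three chains of lengths n, s, t, defined by: M v v = -3; every chain vertex w has M w w = -2; consecutive vertices within each chain have intersection entry 1; the first vertex of each chain has intersection entry 1 with v; and all other off-diagonal entries are 0. Let c ∈ ℚ^N be the vector with c v = 1 and all other entries 0 (this is c i = -2 - M i i for genera p ≡ 0). Then M is negative definite and -cᵀ M⁻¹ c = 1 / (3 - n/(n+1) - s/(s+1) - t/(t+1)). -/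
open Matrix

/-- The intersection matrix of the rational triple point `I_{n,s,t}`: a central `(-3)`-curve
with three attached chains of `n`, `s` and `t` rational `(-2)`-curves. -/
def tripleMatrix (n s t : ℕ) :
    Matrix (Unit ⊕ Fin n ⊕ Fin s ⊕ Fin t) (Unit ⊕ Fin n ⊕ Fin s ⊕ Fin t) ℤ :=
  fun x y =>
    match x, y with
    | .inl _, .inl _ => -3
    | .inl _, .inr (.inl a) => if (a : ℕ) = 0 then 1 else 0
    | .inr (.inl a), .inl _ => if (a : ℕ) = 0 then 1 else 0
    | .inl _, .inr (.inr (.inl a)) => if (a : ℕ) = 0 then 1 else 0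
    | .inr (.inr (.inl a)), .inl _ => if (a : ℕ) = 0 then 1 else 0
    | .inl _, .inr (.inr (.inr a)) => if (a : ℕ) = 0 then 1 else 0
    | .inr (.inr (.inr a)), .inl _ => if (a : ℕ) = 0 then 1 else 0
    | .inr (.inl a), .inr (.inl b) =>
        if a = b then -2 else if (a : ℕ) + 1 = (b : ℕ) ∨ (b : ℕ) + 1 = (a : ℕ) then 1 else 0
    | .inr (.inr (.inl a)), .inr (.inr (.inl b)) =>
        if a = b then -2 else if (a : ℕ) + 1 = (b : ℕ) ∨ (b : ℕ) + 1 = (a : ℕ) then 1 else 0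
    | .inr (.inr (.inr a)), .inr (.inr (.inr b)) =>
        if a = b then -2 else if (a : ℕ) + 1 = (b : ℕ) ∨ (b : ℕ) + 1 = (a : ℕ) then 1 else 0
    | _, _ => 0

/-- The vector `c i = -2 - M i i` for genera `p ≡ 0`: it is `1` on the central `(-3)`-curve and
`0` on all `(-2)`-curves. -/
def tripleC (n s t : ℕ) : Unit ⊕ Fin n ⊕ Fin s ⊕ Fin t → ℚ :=
  Sum.elim (fun _ => 1) (fun _ => 0)

/-!
Let `A` be a positive definite symmetric matrix and `u` a vector. Bordering `A` by `u` and a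
diagonal entry `b` gives a positive definite matrix as soon as `q := uᵀA⁻¹u < b`, because the
Schur complement is `b - q`, and `1 / (b - q)` is then the corner entry of the inverse. Adding the
nodes of a `(-2)`-chain one at a time, `q` follows the continued fraction `q ↦ 1 / (2 - q)` from
`0`, so a chain of length `n` contributes `n / (n + 1)`. The contributions of disjoint chains add
up, and the central `(-3)`-curve is one more bordering step, with `b = 3`.
-/

section Schur

variable {R l m : Type*} [Finite l] [Fintype m] [DecidableEq m] [CommRing R] [PartialOrder R]
  [IsOrderedCancelAddMonoid R] [StarRing R]

lemma posDef_fromBlocks_of_schurComplement {A : Matrix l l R} {B : Matrix l m R}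
    {D : Matrix m m R} [Invertible D] (hD : D.PosDef) (hS : (A - B * D⁻¹ * Bᴴ).PosDef) :
    (fromBlocks A B Bᴴ D).PosDef := by
  have := Fintype.ofFinite l
  refine .of_dotProduct_mulVec_pos
    ((IsHermitian.fromBlocks₂₂ A B hD.isHermitian).mpr hS.isHermitian) fun x hx => ?_
  obtain ⟨z, y, rfl⟩ : ∃ z y, x = Sum.elim z y := ⟨_, _, (Sum.elim_comp_inl_inr x).symm⟩
  rw [dotProduct_mulVec, schur_complement_eq₂₂ A B z y hD.isHermitian, ← dotProduct_mulVec,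
    ← dotProduct_mulVec]
  by_cases hz : z = 0
  · have hy : y ≠ 0 := by
      rintro rfl
      exact hx (by simp [hz])
    simpa [hz] using hD.dotProduct_mulVec_pos hy
  · exact add_pos_of_nonneg_of_pos (hD.posSemidef.dotProduct_mulVec_nonneg _)
      (hS.dotProduct_mulVec_pos hz)

end Schur

/-- The symmetric matrix obtained from `A` by adding a vertex, with diagonal entry `b` and
off-diagonal entries `u`. If `A` is the negated intersection matrix of a configuration of curves,
this attaches a curve of self-intersection `-b` whose negated intersection numbers with the old
curves are the entries of `u`. -/
def borderedMatrix {α m : Type*} (b : α) (u : m → α) (A : Matrix m m α) :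
    Matrix (Unit ⊕ m) (Unit ⊕ m) α :=
  fromBlocks (of fun _ _ => b) (replicateRow Unit u) (replicateCol Unit u) A

lemma borderedMatrix_mulVec {R m : Type*} [Fintype m] [CommSemiring R] (b z : R) (u y : m → R)
    (A : Matrix m m R) :
    borderedMatrix b u A *ᵥ Sum.elim (fun _ => z) y =
      Sum.elim (fun _ => b * z + u ⬝ᵥ y) (z • u + A *ᵥ y) := by
  rw [borderedMatrix, fromBlocks_mulVec]
  ext (i | i) <;> simp [mulVec, dotProduct, mul_comm]

/-- The matrix `A` is positive definite and `q` is the square of the norm of the linear form `u`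
for the dual of the inner product given by `A`. If `-A` is the intersection matrix of the
exceptional curves of a resolution and `u` lists their intersection numbers with the canonical
divisor `K`, then `q = -K²`. -/
structure HasDualNormSq {K m : Type*} [Fintype m] [DecidableEq m] [Field K] [PartialOrder K]
    [StarRing K] (A : Matrix m m K) (u : m → K) (q : K) : Prop where
  posDef : A.PosDef
  dotProduct_inv_mulVec : u ⬝ᵥ A⁻¹ *ᵥ u = q

namespace HasDualNormSq

section PartialOrder

variable {K l m : Type*} [Fintype l] [Fintype m] [DecidableEq l] [DecidableEq m]
  [Field K] [PartialOrder K] [StarRing K]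
  {A : Matrix m m K} {D : Matrix l l K} {u y : m → K} {v : l → K} {q r : K}

lemma mulVec_inv_mulVec (h : HasDualNormSq A u q) : A *ᵥ (A⁻¹ *ᵥ u) = u := by
  rw [mulVec_mulVec, mul_nonsing_inv A ((isUnit_iff_isUnit_det A).mp h.posDef.isUnit),
    one_mulVec]

lemma of_mulVec_eq (hA : A.PosDef) (hy : A *ᵥ y = u) (hq : u ⬝ᵥ y = q) :
    HasDualNormSq A u q where
  posDef := hA
  dotProduct_inv_mulVec := by
    rw [← hq, ← hy, mulVec_mulVec _ A⁻¹,
      nonsing_inv_mul A ((isUnit_iff_isUnit_det A).mp hA.isUnit), one_mulVec]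

lemma of_isEmpty [IsEmpty m] : HasDualNormSq A u 0 where
  posDef := .of_dotProduct_mulVec_pos (Subsingleton.elim _ _) fun x hx =>
    absurd (Subsingleton.elim x 0) hx
  dotProduct_inv_mulVec := dotProduct_of_isEmpty _ _

lemma submatrix (h : HasDualNormSq A u q) (e : l ≃ m) :
    HasDualNormSq (A.submatrix e e) (u ∘ e) q := by
  refine of_mulVec_eq (y := (A⁻¹ *ᵥ u) ∘ e) (h.posDef.submatrix e.injective) ?_ ?_
  · rw [submatrix_mulVec_equiv, Function.comp_assoc, e.self_comp_symm, Function.comp_id,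
      h.mulVec_inv_mulVec]
  · rw [comp_equiv_dotProduct_comp_equiv, h.dotProduct_inv_mulVec]

lemma neg_dotProduct_inv_mulVec (h : HasDualNormSq (-A) u q) : -(u ⬝ᵥ A⁻¹ *ᵥ u) = q := by
  have hdet : IsUnit A.det :=
    (isUnit_iff_isUnit_det A).mp ((IsUnit.neg_iff A).mp h.posDef.isUnit)
  have hinv : (-A)⁻¹ = -A⁻¹ := inv_eq_left_inv (by rw [neg_mul_neg, nonsing_inv_mul A hdet])
  rw [← h.dotProduct_inv_mulVec, hinv, neg_mulVec, dotProduct_neg]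

lemma directSum [IsOrderedCancelAddMonoid K] (hA : HasDualNormSq A u q)
    (hD : HasDualNormSq D v r) :
    HasDualNormSq (fromBlocks A 0 0 D) (Sum.elim u v) (q + r) := by
  refine of_mulVec_eq (y := Sum.elim (A⁻¹ *ᵥ u) (D⁻¹ *ᵥ v)) ?_ ?_ ?_
  · let := hD.posDef.isUnit.invertible
    simpa using posDef_fromBlocks_of_schurComplement (B := 0) hD.posDef (by simpa using hA.posDef)
  · simp [fromBlocks_mulVec, hA.mulVec_inv_mulVec, hD.mulVec_inv_mulVec]
  · rw [sumElim_dotProduct_sumElim, hA.dotProduct_inv_mulVec, hD.dotProduct_inv_mulVec]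

end PartialOrder

section LinearOrder

variable {K m : Type*} [Fintype m] [DecidableEq m] [Field K] [LinearOrder K]
  [IsStrictOrderedRing K] [StarRing K] [TrivialStar K]
  {A : Matrix m m K} {u : m → K} {b q : K}

lemma posDef_borderedMatrix (h : HasDualNormSq A u q) (hq : q < b) :
    (borderedMatrix b u A).PosDef := by
  let := h.posDef.isUnit.invertible
  have hrow : (replicateRow Unit u)ᴴ = replicateCol Unit u := by
    rw [conjTranspose_replicateRow, star_trivial]
  have hschur : of (fun _ _ => b) - replicateRow Unit u * A⁻¹ * replicateCol Unit u =
      diagonal fun _ => b - q := by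
    ext
    rw [Matrix.mul_assoc, ← replicateCol_mulVec]
    simp [← h.dotProduct_inv_mulVec]
  rw [borderedMatrix, ← hrow]
  refine posDef_fromBlocks_of_schurComplement h.posDef ?_
  rw [hrow, hschur]
  refine .of_dotProduct_mulVec_pos (by simp [IsHermitian]) fun z hz => ?_
  have hz' : z () ≠ 0 := fun h0 => hz (funext fun _ => h0)
  calc
    0 < z () * ((b - q) * z ()) := by
      rw [mul_left_comm]
      exact mul_pos (sub_pos.mpr hq) (mul_self_pos.mpr hz')
    _ = star z ⬝ᵥ (diagonal fun _ => b - q) *ᵥ z := by simp [dotProduct, mulVec_diagonal]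

lemma bordered (h : HasDualNormSq A u q) (hq : q < b) (r : K) :
    HasDualNormSq (borderedMatrix b u A) (Sum.elim (fun _ => r) 0) (r ^ 2 / (b - q)) := by
  have hbq : b - q ≠ 0 := (sub_pos.mpr hq).ne'
  have hmul : borderedMatrix b u A *ᵥ Sum.elim (fun _ => 1) (-(A⁻¹ *ᵥ u)) =
      Sum.elim (fun _ => b - q) 0 := by
    simp [borderedMatrix_mulVec, mulVec_neg, h.mulVec_inv_mulVec, h.dotProduct_inv_mulVec,
      sub_eq_add_neg]
  refine of_mulVec_eq (y := (r / (b - q)) • Sum.elim (fun _ => 1) (-(A⁻¹ *ᵥ u)))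
    (h.posDef_borderedMatrix hq) ?_ ?_
  · rw [mulVec_smul, hmul]
    ext (i | i) <;> simp [hbq]
  · rw [dotProduct_smul, sumElim_dotProduct_sumElim, zero_dotProduct]
    simp [dotProduct, pow_two, div_mul_eq_mul_div]

end LinearOrder

end HasDualNormSq

section Chain

/-- The column by which a vertex attached to the first node of a chain of `n` nodes enters the
Cartan matrix. Testing `(i : ℕ) = 0` lets the definition cover the empty chain. -/
def chainEnd (R : Type*) [Ring R] (n : ℕ) : Fin n → R := fun i => if (i : ℕ) = 0 then -1 else 0

/-- The splitting of a chain of `n + 1` nodes into its first node and the remaining chain. -/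
def finSuccEquivUnitSum (n : ℕ) : Fin (n + 1) ≃ Unit ⊕ Fin n :=
  (finSuccEquiv n).trans ((Equiv.optionEquivSumPUnit _).trans (Equiv.sumComm _ _))

lemma chainEnd_succ {R : Type*} [Ring R] (n : ℕ) :
    chainEnd R (n + 1) = Sum.elim (fun _ => -1) 0 ∘ finSuccEquivUnitSum n := by
  ext i
  cases i using Fin.cases <;> simp [chainEnd, finSuccEquivUnitSum]

lemma cartanMatrix_A_succ {R : Type*} [Ring R] (n : ℕ) :
    (CartanMatrix.A (n + 1)).map (Int.cast : ℤ → R) =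
      (borderedMatrix 2 (chainEnd R n) ((CartanMatrix.A n).map Int.cast)).submatrix
        (finSuccEquivUnitSum n) (finSuccEquivUnitSum n) := by
  ext i j
  cases i using Fin.cases <;> cases j using Fin.cases <;>
    simp [CartanMatrix.A, borderedMatrix, chainEnd, finSuccEquivUnitSum, Fin.ext_iff]

lemma neg_tripleMatrix_eq_borderedMatrix {R : Type*} [Ring R] (n s t : ℕ) :
    -(tripleMatrix n s t).map (Int.cast : ℤ → R) =
      borderedMatrix 3 (Sum.elim (chainEnd R n) (Sum.elim (chainEnd R s) (chainEnd R t)))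
        (fromBlocks ((CartanMatrix.A n).map Int.cast) 0 0
          (fromBlocks ((CartanMatrix.A s).map Int.cast) 0 0
            ((CartanMatrix.A t).map Int.cast))) := by
  ext (_ | i | i | i) (_ | j | j | j) <;>
    simp [tripleMatrix, borderedMatrix, chainEnd, CartanMatrix.A, apply_ite (Int.cast : ℤ → R),
      apply_ite (Neg.neg : R → R)]

lemma natCast_div_add_one_lt_one (K : Type*) [Field K] [LinearOrder K] [IsStrictOrderedRing K]
    (n : ℕ) : (n / (n + 1) : K) < 1 :=
  (div_lt_one (by positivity)).mpr (lt_add_one _)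

variable (K : Type*) [Field K] [LinearOrder K] [IsStrictOrderedRing K] [StarRing K] [TrivialStar K]

lemma hasDualNormSq_cartanMatrix_A (n : ℕ) :
    HasDualNormSq ((CartanMatrix.A n).map (Int.cast : ℤ → K)) (chainEnd K n) (n / (n + 1)) := by
  induction n with
  | zero => simpa using HasDualNormSq.of_isEmpty
  | succ n ih =>
    have hlt : (n / (n + 1) : K) < 2 := (natCast_div_add_one_lt_one K n).trans one_lt_two
    have hq : ((n + 1 : ℕ) / ((n + 1 : ℕ) + 1) : K) = (-1) ^ 2 / (2 - n / (n + 1)) := by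
      have hn : (n : K) + 1 ≠ 0 := by positivity
      rw [eq_div_iff (sub_pos.mpr hlt).ne', Nat.cast_succ]
      field_simp
      ring
    rw [cartanMatrix_A_succ, chainEnd_succ, hq]
    exact (ih.bordered hlt (-1)).submatrix (finSuccEquivUnitSum n)

lemma hasDualNormSq_neg_tripleMatrix (n s t : ℕ) :
    HasDualNormSq (-(tripleMatrix n s t).map (Int.cast : ℤ → K)) (Sum.elim (fun _ => 1) 0)
      (1 / (3 - n / (n + 1) - s / (s + 1) - t / (t + 1))) := by
  have hchains := (hasDualNormSq_cartanMatrix_A K n).directSum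
    ((hasDualNormSq_cartanMatrix_A K s).directSum (hasDualNormSq_cartanMatrix_A K t))
  have hlt : (n / (n + 1) + (s / (s + 1) + t / (t + 1)) : K) < 3 := by
    linarith [natCast_div_add_one_lt_one K n, natCast_div_add_one_lt_one K s,
      natCast_div_add_one_lt_one K t]
  rw [neg_tripleMatrix_eq_borderedMatrix]
  simpa only [one_pow, sub_sub, add_assoc] using hchains.bordered hlt 1

end Chain

theorem negK2_triple_point_I_general {K : Type*} [Field K] [LinearOrder K]
    [IsStrictOrderedRing K] (n s t : ℕ) :
    (∀ x : Unit ⊕ Fin n ⊕ Fin s ⊕ Fin t → K, x ≠ 0 →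
      x ⬝ᵥ (((tripleMatrix n s t).map (Int.cast : ℤ → K)) *ᵥ x) < 0) ∧
    -(Sum.elim (fun _ => 1) 0 ⬝ᵥ
        (((tripleMatrix n s t).map (Int.cast : ℤ → K))⁻¹ *ᵥ Sum.elim (fun _ => 1) 0)) =
      1 / (3 - (n : K) / (n + 1) - (s : K) / (s + 1) - (t : K) / (t + 1)) := by
  let := starRingOfComm (R := K)
  have : TrivialStar K := ⟨fun _ => rfl⟩
  have h := hasDualNormSq_neg_tripleMatrix K n s t
  refine ⟨fun x hx => ?_, h.neg_dotProduct_inv_mulVec⟩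
  simpa [neg_mulVec] using h.posDef.dotProduct_mulVec_pos hx

/-- **Example 2.7, type `I_{n,s,t}`.** The intersection matrix of the rational triple point
`I_{n,s,t}` is negative definite and `-K² = 1/(3 - n/(n+1) - s/(s+1) - t/(t+1))`. -/
theorem negK2_triple_point_I (n s t : ℕ) :
    (∀ x : Unit ⊕ Fin n ⊕ Fin s ⊕ Fin t → ℝ, x ≠ 0 →
      x ⬝ᵥ (((tripleMatrix n s t).map (Int.cast : ℤ → ℝ)) *ᵥ x) < 0) ∧
    - (tripleC n s t ⬝ᵥ (((tripleMatrix n s t).map (Int.cast : ℤ → ℚ))⁻¹ *ᵥ tripleC n s t)) =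
      1 / (3 - (n : ℚ) / ((n : ℚ) + 1) - (s : ℚ) / ((s : ℚ) + 1) - (t : ℚ) / ((t : ℚ) + 1)) :=
  ⟨(negK2_triple_point_I_general n s t).1, (negK2_triple_point_I_general n s t).2⟩
end

section
/- Let r, k be positive integers with r ≥ k - 1 and r ≡ k + 1 (mod 2), and let n ∈ ℕ. Let M be the (n+1)×(n+1) symmetric integer tridiagonal matrix with M i i = -2 for 0 ≤ i ≤ n-1, M n n = -(k+1), M i (i+1) = M (i+1) i = 1 for 0 ≤ i ≤ n-1, and all other entries 0; let p i = 0 for i < n and p n = (r - k + 1)/2, and set c i = 2·(p i) - 2 - M i i (so c i = 0 for i < n and c n = r). Then M is negative definite and -cᵀ M⁻¹ c = r² / (k + 1 - n/(n+1)). -/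
open Matrix

/-!
Summation by parts along the chain turns the intersection form into
`x ⬝ᵥ M *ᵥ y = -(x₀ y₀ + ∑ (xᵢ₊₁ - xᵢ) (yᵢ₊₁ - yᵢ) + k xₙ yₙ)`.
For `x = y` the right-hand side is minus a sum of squares, which gives negative definiteness. For
`y = (1, 2, …, n + 1)` the sum telescopes, so `M *ᵥ y` is supported at the last curve, as is the
vector `c = (0, …, 0, r)`; hence `M⁻¹ *ᵥ c` is a multiple of `y`.
-/

/-- The intersection matrix of a chain of `n` curves of self-intersection `-2` followed by a curve
of self-intersection `-(a + 1)`, each meeting the next one transversally in one point. -/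
def chainMatrix {R : Type*} [Ring R] (n : ℕ) (a : R) : Matrix (Fin (n + 1)) (Fin (n + 1)) R :=
  fun i j =>
    if i = j then (if (i : ℕ) = n then -(a + 1) else -2)
    else if (i : ℕ) + 1 = (j : ℕ) ∨ (j : ℕ) + 1 = (i : ℕ) then 1 else 0

/-- The degrees `K · Aᵢ = 2 pᵢ - 2 - Aᵢ²` given by the adjunction formula for curves `Aᵢ` of
arithmetic genus `pᵢ` with intersection matrix `M`. -/
def canonicalDegree {ι R : Type*} [Ring R] (M : Matrix ι ι R) (p : ι → R) : ι → R :=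
  fun i => 2 * p i - 2 - M i i

lemma sum_succ_sub_castSucc {G : Type*} [AddCommGroup G] {n : ℕ} (x : Fin (n + 1) → G) :
    ∑ i : Fin n, (x i.succ - x i.castSucc) = x (Fin.last n) - x 0 := by
  rw [Finset.sum_sub_distrib, sub_eq_sub_iff_add_eq_add, add_comm, ← Fin.sum_univ_succ,
    Fin.sum_univ_castSucc, add_comm]

section Ring

variable {R : Type*} [Ring R] {n : ℕ} (a : R)

lemma map_intCast_chainMatrix (b : ℤ) :
    (chainMatrix n b).map (Int.cast : ℤ → R) = chainMatrix n (b : R) := by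
  ext i j
  simp only [chainMatrix, map_apply]
  split_ifs <;> simp

lemma canonicalDegree_chainMatrix_single_last (g : R) :
    canonicalDegree (chainMatrix n a) (Pi.single (Fin.last n) g) =
      Pi.single (Fin.last n) (2 * g + a - 1) := by
  ext i
  rcases eq_or_ne i (Fin.last n) with rfl | hi
  · simp only [canonicalDegree, chainMatrix, Pi.single_eq_same, Fin.val_last, if_true,
      ← one_add_one_eq_two]
    noncomm_ring
  · have hin : (i : ℕ) ≠ n := fun h => hi (Fin.ext h)
    simp [canonicalDegree, chainMatrix, hi, hin]

lemma chainMatrix_zero_zero : chainMatrix (n + 1) a 0 0 = -2 := by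
  simp [chainMatrix]

lemma chainMatrix_zero_succ (j : Fin (n + 1)) :
    chainMatrix (n + 1) a 0 j.succ = (Pi.single 0 1 : Fin (n + 1) → R) j := by
  simp [chainMatrix, Pi.single_apply, (Fin.succ_ne_zero j).symm]

lemma chainMatrix_succ_zero (i : Fin (n + 1)) :
    chainMatrix (n + 1) a i.succ 0 = (Pi.single 0 1 : Fin (n + 1) → R) i := by
  simp [chainMatrix, Pi.single_apply]

lemma chainMatrix_succ_succ (i j : Fin (n + 1)) :
    chainMatrix (n + 1) a i.succ j.succ = chainMatrix n a i j := by
  simp [chainMatrix]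

lemma chainMatrix_mulVec_zero (x : Fin (n + 2) → R) :
    (chainMatrix (n + 1) a *ᵥ x) 0 = x 1 - 2 * x 0 := by
  rw [mulVec, dotProduct, Fin.sum_univ_succ]
  simp only [chainMatrix_zero_zero, chainMatrix_zero_succ, Pi.single_apply, ite_mul, one_mul,
    zero_mul, Finset.sum_ite_eq', Finset.mem_univ, if_true, Fin.succ_zero_eq_one, neg_mul,
    neg_add_eq_sub]

lemma chainMatrix_mulVec_succ (x : Fin (n + 2) → R) (i : Fin (n + 1)) :
    (chainMatrix (n + 1) a *ᵥ x) i.succ =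
      (Pi.single 0 (x 0) : Fin (n + 1) → R) i + (chainMatrix n a *ᵥ Fin.tail x) i := by
  rw [mulVec, dotProduct, Fin.sum_univ_succ]
  simp only [chainMatrix_succ_zero, chainMatrix_succ_succ]
  simp [Pi.single_apply, mulVec, dotProduct, Fin.tail]

end Ring

section CommRing

variable {R : Type*} [CommRing R] {n : ℕ} (a : R)

lemma dotProduct_chainMatrix_mulVec (x y : Fin (n + 1) → R) :
    x ⬝ᵥ chainMatrix n a *ᵥ y =
      -(x 0 * y 0 + ∑ i : Fin n, (x i.succ - x i.castSucc) * (y i.succ - y i.castSucc) +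
        a * (x (Fin.last n) * y (Fin.last n))) := by
  induction n with
  | zero =>
    have entry : x ⬝ᵥ chainMatrix 0 a *ᵥ y = x 0 * (-(a + 1) * y 0) := by
      simp [chainMatrix, mulVec, dotProduct]
    rw [entry, Fin.sum_univ_zero, Fin.last_zero]
    ring
  | succ n ih =>
    have peel : x ⬝ᵥ chainMatrix (n + 1) a *ᵥ y =
        x 0 * (y 1 - 2 * y 0) + (x 1 * y 0 + Fin.tail x ⬝ᵥ chainMatrix n a *ᵥ Fin.tail y) := by
      rw [dotProduct, Fin.sum_univ_succ]
      simp only [chainMatrix_mulVec_zero, chainMatrix_mulVec_succ, mul_add, Finset.sum_add_distrib]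
      simp [dotProduct, Fin.tail, Pi.single_apply]
    rw [peel, ih, Fin.sum_univ_succ]
    simp only [Fin.tail, Fin.succ_last, Fin.succ_zero_eq_one, Fin.castSucc_zero,
      Fin.succ_castSucc]
    ring

lemma chainMatrix_mulVec_val_add_one :
    chainMatrix n a *ᵥ (fun i => (i : R) + 1) = Pi.single (Fin.last n) (-(a * (n + 1) + 1)) := by
  refine dotProduct_eq _ _ fun x => ?_
  rw [dotProduct_comm, dotProduct_chainMatrix_mulVec, single_dotProduct]
  simp only [Fin.val_succ, Fin.val_castSucc, Fin.val_zero, Fin.val_last, Nat.cast_add, Nat.cast_one,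
    Nat.cast_zero, add_sub_cancel_left, mul_one, zero_add, sum_succ_sub_castSucc]
  ring

end CommRing

lemma det_ne_zero_of_dotProduct_mulVec_ne_zero {ι R : Type*} [Fintype ι] [DecidableEq ι]
    [CommRing R] [IsDomain R] {A : Matrix ι ι R} (hA : ∀ x ≠ 0, x ⬝ᵥ A *ᵥ x ≠ 0) : A.det ≠ 0 :=
  fun hdet =>
    have ⟨x, hx, hAx⟩ := exists_mulVec_eq_zero_iff.2 hdet
    hA x hx (by rw [hAx, dotProduct_zero])

section OrderedRing

variable {R : Type*} [CommRing R] [LinearOrder R] [IsStrictOrderedRing R] {n : ℕ}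

lemma sq_add_sum_sq_sub_pos {x : Fin (n + 1) → R} (hx : x ≠ 0) :
    0 < x 0 ^ 2 + ∑ i : Fin n, (x i.succ - x i.castSucc) ^ 2 := by
  have hsum : 0 ≤ ∑ i : Fin n, (x i.succ - x i.castSucc) ^ 2 :=
    Finset.sum_nonneg fun i _ => sq_nonneg _
  refine (add_nonneg (sq_nonneg _) hsum).lt_of_ne' fun h => hx ?_
  obtain ⟨hzero, hdiff⟩ := (add_eq_zero_iff_of_nonneg (sq_nonneg _) hsum).1 h
  rw [Finset.sum_eq_zero_iff_of_nonneg fun i _ => sq_nonneg _] at hdiff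
  ext i
  induction i using Fin.induction with
  | zero => exact sq_eq_zero_iff.1 hzero
  | succ i ih =>
    have hstep : x i.succ = x i.castSucc :=
      sub_eq_zero.1 <| sq_eq_zero_iff.1 <| hdiff i (Finset.mem_univ i)
    exact hstep.trans ih

lemma dotProduct_chainMatrix_mulVec_neg {a : R} (ha : 0 ≤ a) {x : Fin (n + 1) → R} (hx : x ≠ 0) :
    x ⬝ᵥ chainMatrix n a *ᵥ x < 0 := by
  rw [dotProduct_chainMatrix_mulVec, neg_lt_zero]
  simp only [← sq]
  exact add_pos_of_pos_of_nonneg (sq_add_sum_sq_sub_pos hx) (mul_nonneg ha (sq_nonneg _))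

end OrderedRing

section OrderedField

variable {K : Type*} [Field K] [LinearOrder K] [IsStrictOrderedRing K] {n : ℕ} {a : K}

lemma chainMatrix_inv_mulVec_single_last (ha : 0 ≤ a) (s : K) :
    (chainMatrix n a)⁻¹ *ᵥ Pi.single (Fin.last n) s =
      (-s / (a * (n + 1) + 1)) • fun i : Fin (n + 1) => (i : K) + 1 := by
  have hdet : (chainMatrix n a).det ≠ 0 := det_ne_zero_of_dotProduct_mulVec_ne_zero fun x hx =>
    (dotProduct_chainMatrix_mulVec_neg ha hx).ne
  have := invertibleOfIsUnitDet _ hdet.isUnit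
  have hD : a * (n + 1) + 1 ≠ 0 := by positivity
  refine inv_mulVec_eq_vec ?_
  rw [mulVec_smul, chainMatrix_mulVec_val_add_one, ← Pi.single_smul, smul_eq_mul,
    div_mul_eq_mul_div, neg_mul_neg, mul_div_cancel_right₀ _ hD]

lemma neg_single_last_dotProduct_chainMatrix_inv_mulVec (ha : 0 ≤ a) (s : K) :
    -(Pi.single (Fin.last n) s ⬝ᵥ (chainMatrix n a)⁻¹ *ᵥ Pi.single (Fin.last n) s) =
      s ^ 2 / (a + 1 - n / (n + 1)) := by
  have hD : a * (n + 1) + 1 ≠ 0 := by positivity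
  have hden : a + 1 - n / (n + 1) = (a * (n + 1) + 1) / (n + 1) := by
    field_simp
    ring
  rw [chainMatrix_inv_mulVec_single_last ha, single_dotProduct, Pi.smul_apply, Fin.val_last,
    smul_eq_mul, hden]
  field_simp

end OrderedField

/-- **Proposition 2.5, case `r - k` odd (explicit computation).** For the chain of `n` rational
`(-2)`-curves attached to a curve of genus `(r-k+1)/2` with self-intersection `-(k+1)`, the
intersection matrix is negative definite and `-cᵀ M⁻¹ c = r²/(k + 1 - n/(n+1))`. -/
theorem negK2_chain_with_tail (r k : ℕ) (hr : 0 < r) (hk : 0 < k)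
    (hrk : k - 1 ≤ r) (hpar : r % 2 = (k + 1) % 2) (n : ℕ)
    (M : Matrix (Fin (n + 1)) (Fin (n + 1)) ℤ)
    (hM : M = fun i j : Fin (n + 1) =>
      if i = j then (if (i : ℕ) = n then -((k : ℤ) + 1) else -2)
      else if (i : ℕ) + 1 = (j : ℕ) ∨ (j : ℕ) + 1 = (i : ℕ) then 1 else 0)
    (p : Fin (n + 1) → ℕ)
    (hp : p = fun i : Fin (n + 1) => if (i : ℕ) = n then (r - k + 1) / 2 else 0)
    (c : Fin (n + 1) → ℚ)
    (hc : c = fun i : Fin (n + 1) => 2 * (p i : ℚ) - 2 - (M i i : ℚ)) :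
    (∀ x : Fin (n + 1) → ℝ, x ≠ 0 → x ⬝ᵥ ((M.map (Int.cast : ℤ → ℝ)) *ᵥ x) < 0) ∧
    - (c ⬝ᵥ ((M.map (Int.cast : ℤ → ℚ))⁻¹ *ᵥ c)) =
      (r : ℚ) ^ 2 / ((k : ℚ) + 1 - (n : ℚ) / ((n : ℚ) + 1)) := by
  obtain rfl : M = chainMatrix n (k : ℤ) := hM
  have hgenus : 2 * (((r - k + 1) / 2 : ℕ) : ℚ) + k - 1 = r := by
    have h : 2 * ((r - k + 1) / 2) + k = r + 1 := by omega
    rw [sub_eq_iff_eq_add]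
    exact_mod_cast h
  have hpsingle : (fun i => (p i : ℚ)) = Pi.single (Fin.last n) (((r - k + 1) / 2 : ℕ) : ℚ) := by
    ext i
    simp [hp, Pi.single_apply, Fin.ext_iff]
  have hcdeg : c = canonicalDegree ((chainMatrix n (k : ℤ)).map Int.cast) fun i => (p i : ℚ) := hc
  rw [map_intCast_chainMatrix, Int.cast_natCast, hpsingle, canonicalDegree_chainMatrix_single_last,
    hgenus] at hcdeg
  rw [map_intCast_chainMatrix, map_intCast_chainMatrix, Int.cast_natCast, Int.cast_natCast, hcdeg]
  exact ⟨fun x hx => dotProduct_chainMatrix_mulVec_neg k.cast_nonneg hx,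
    neg_single_last_dotProduct_chainMatrix_inv_mulVec k.cast_nonneg _⟩
end

section
/- Let (M, p) be a resolution datum of size r with -cᵀ M⁻¹ c < 1. Let Z : Fin r → ℤ be a nonzero vector with Z i ≥ 0 for all i, and assume 2 + Zᵀ M Z + cᵀ Z ≥ 0 (i.e., the arithmetic genus p_a(Z) = 1 + (ZᵀMZ + cᵀZ)/2 is nonnegative, as holds for the fundamental cycle). Then Zᵀ M Z + cᵀ Z = -2, and cᵀ Z = 0 or cᵀ Z = 1 (equivalently, Zᵀ M Z = -2 or Zᵀ M Z = -3). -/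
open Matrix

/-- The integer vector `c i = 2 p i - 2 - M i i`. -/
def ResolutionDatum.cInt {r : ℕ} (D : ResolutionDatum r) : Fin r → ℤ :=
  fun i => 2 * (D.p i : ℤ) - 2 - D.M i i

/-!
The bound `-K² < 1` and the Cauchy–Schwarz inequality for the negative definite intersection form
give `(K·Z)² < -Z²`, while `0 ≤ p_a(Z)` says `-Z² ≤ 2 + K·Z`. Hence `(K·Z)² < 2 + K·Z`, which leaves
`K·Z ∈ {0, 1}` and then `-2 ≤ Z² + K·Z < 0`. As `K` is characteristic for the form, `Z² + K·Z` is
even, so it equals `-2`.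
-/

section Parity

variable {ι : Type*} [Fintype ι]

theorem dotProduct_mulVec_self_of_charTwo {R : Type*} [CommRing R] [CharP R 2]
    {A : Matrix ι ι R} (hA : A.IsSymm) (x : ι → R) :
    x ⬝ᵥ (A *ᵥ x) = ∑ i, A i i * x i ^ 2 := by
  classical
  have cross_terms_cancel (x y : ι → R) : x ⬝ᵥ (A *ᵥ y) + y ⬝ᵥ (A *ᵥ x) = 0 := by
    rw [dotProduct_mulVec y, ← mulVec_transpose, hA.eq, dotProduct_comm (A *ᵥ y),
      CharTwo.add_self_eq_zero]
  -- Both sides are additive in `x`, so it suffices to compare them on `Pi.single i a`.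
  let form : (ι → R) →+ R := AddMonoidHom.mk' (fun x ↦ x ⬝ᵥ (A *ᵥ x)) fun x y ↦ by
    simp only [mulVec_add, dotProduct_add, add_dotProduct]
    linear_combination cross_terms_cancel x y
  let diagonalForm : (ι → R) →+ R := AddMonoidHom.mk' (fun x ↦ ∑ i, A i i * x i ^ 2) fun x y ↦ by
    simp only [Pi.add_apply, CharTwo.add_sq, mul_add, Finset.sum_add_distrib]
  have form_eq : form = diagonalForm := AddMonoidHom.functions_ext _ _ _ fun i a ↦ by
    simp [form, diagonalForm, Pi.single_apply, sq, mul_left_comm, mul_comm]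
  exact DFunLike.congr_fun form_eq x

theorem even_dotProduct_mulVec_self_add_dotProduct {A : Matrix ι ι ℤ} (hA : A.IsSymm)
    {c : ι → ℤ} (hc : ∀ i, Even (A i i + c i)) (x : ι → ℤ) :
    Even (x ⬝ᵥ (A *ᵥ x) + c ⬝ᵥ x) := by
  have form_eq : ((x ⬝ᵥ (A *ᵥ x) : ℤ) : ZMod 2) = ∑ i, (A i i * x i : ZMod 2) := by
    simpa [dotProduct, mulVec] using
      dotProduct_mulVec_self_of_charTwo (hA.map (Int.cast : ℤ → ZMod 2)) (Int.cast ∘ x)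
  have diag_add_eq_zero (i : ι) : (A i i + c i : ZMod 2) = 0 := by
    exact_mod_cast ZMod.intCast_eq_zero_iff_even.mpr (hc i)
  rw [← ZMod.intCast_eq_zero_iff_even, Int.cast_add, form_eq]
  simp [dotProduct, ← Finset.sum_add_distrib, ← add_mul, diag_add_eq_zero]

end Parity

section CauchySchwarz

variable {ι : Type*} [Fintype ι] [DecidableEq ι]

theorem nonsing_inv_neg {R : Type*} [CommRing R] (A : Matrix ι ι R) : (-A)⁻¹ = -A⁻¹ := by
  by_cases hA : IsUnit A
  · exact inv_eq_right_inv <| by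
      rw [neg_mul_neg, mul_nonsing_inv _ (A.isUnit_iff_isUnit_det.mp hA)]
  · simp [nonsing_inv_eq_ringInverse, Ring.inverse_non_unit, hA]

variable {K : Type*} [Field K] [LinearOrder K] [IsStrictOrderedRing K] [StarRing K] [TrivialStar K]
  {A : Matrix ι ι K}

theorem sq_dotProduct_le_dotProduct_inv_mulVec_mul (hA : A.PosDef) (c x : ι → K) :
    (c ⬝ᵥ x) ^ 2 ≤ (c ⬝ᵥ (A⁻¹ *ᵥ c)) * (x ⬝ᵥ (A *ᵥ x)) := by
  have hsymm : A.IsSymm := isHermitian_iff_isSymm.mp hA.isHermitian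
  have mulVec_inv : A *ᵥ (A⁻¹ *ᵥ c) = c := by
    rw [mulVec_mulVec, mul_nonsing_inv _ (A.isUnit_iff_isUnit_det.mp hA.isUnit), one_mulVec]
  have pairing : (A⁻¹ *ᵥ c) ⬝ᵥ (A *ᵥ x) = c ⬝ᵥ x := by
    rw [dotProduct_mulVec, ← mulVec_transpose, hsymm.eq, mulVec_inv]
  have form_nonneg (y : ι → K) : 0 ≤ A.toBilin' y y := by
    simpa [toBilin'_apply'] using hA.posSemidef.dotProduct_mulVec_nonneg y
  have cauchy_schwarz := A.toBilin'.apply_sq_le_of_symm form_nonneg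
    ⟨(isSymm_toBilin'_iff_isSymm.mpr hsymm).eq⟩ (A⁻¹ *ᵥ c) x
  simpa only [toBilin'_apply', pairing, mulVec_inv, dotProduct_comm (A⁻¹ *ᵥ c) c]
    using cauchy_schwarz

theorem sq_dotProduct_lt_of_dotProduct_inv_mulVec_lt_one (hA : A.PosDef) {c x : ι → K}
    (hc : c ⬝ᵥ (A⁻¹ *ᵥ c) < 1) (hx : x ≠ 0) : (c ⬝ᵥ x) ^ 2 < x ⬝ᵥ (A *ᵥ x) := by
  have hpos : 0 < x ⬝ᵥ (A *ᵥ x) := by simpa using hA.dotProduct_mulVec_pos hx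
  calc (c ⬝ᵥ x) ^ 2 ≤ (c ⬝ᵥ (A⁻¹ *ᵥ c)) * (x ⬝ᵥ (A *ᵥ x)) :=
        sq_dotProduct_le_dotProduct_inv_mulVec_mul hA c x
    _ < x ⬝ᵥ (A *ᵥ x) := mul_lt_of_lt_one_left hpos hc

theorem sq_dotProduct_lt_neg_of_neg_posDef {M : Matrix ι ι ℤ}
    (hM : (-M.map (Int.cast : ℤ → ℚ)).PosDef) {c Z : ι → ℤ}
    (hc : -((Int.cast ∘ c) ⬝ᵥ ((M.map (Int.cast : ℤ → ℚ))⁻¹ *ᵥ (Int.cast ∘ c))) < 1)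
    (hZ : Z ≠ 0) : (c ⬝ᵥ Z) ^ 2 < -(Z ⬝ᵥ (M *ᵥ Z)) := by
  have cast_ne_zero : (Int.cast ∘ Z : ι → ℚ) ≠ 0 := fun h ↦
    hZ <| funext fun i ↦ by simpa using congrFun h i
  have hlt := sq_dotProduct_lt_of_dotProduct_inv_mulVec_lt_one hM
    (by simpa only [nonsing_inv_neg, neg_mulVec, dotProduct_neg] using hc) cast_ne_zero
  rw [neg_mulVec, dotProduct_neg] at hlt
  simp only [dotProduct, mulVec, Matrix.map_apply, Function.comp_apply] at hlt ⊢
  exact_mod_cast hlt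

end CauchySchwarz

theorem fundamental_cycle_of_negK2_lt_one_general {ι : Type*} [Fintype ι] [DecidableEq ι]
    {M : Matrix ι ι ℤ} (hM : (-M.map (Int.cast : ℤ → ℚ)).PosDef)
    {c : ι → ℤ} (hc : ∀ i, Even (M i i + c i))
    (hK : -((Int.cast ∘ c) ⬝ᵥ ((M.map (Int.cast : ℤ → ℚ))⁻¹ *ᵥ (Int.cast ∘ c))) < 1)
    {Z : ι → ℤ} (hZ : Z ≠ 0) (hpa : 0 ≤ 2 + Z ⬝ᵥ (M *ᵥ Z) + c ⬝ᵥ Z) :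
    Z ⬝ᵥ (M *ᵥ Z) + c ⬝ᵥ Z = -2 ∧ (c ⬝ᵥ Z = 0 ∨ c ⬝ᵥ Z = 1) := by
  have hsymm : M.IsSymm := (isSymm_map_iff Int.cast_injective).mp <|
    isSymm_neg_iff.mp <| isHermitian_iff_isSymm.mp hM.isHermitian
  have hlt : (c ⬝ᵥ Z) ^ 2 < -(Z ⬝ᵥ (M *ᵥ Z)) := sq_dotProduct_lt_neg_of_neg_posDef hM hK hZ
  obtain ⟨m, hm⟩ := even_dotProduct_mulVec_self_add_dotProduct hsymm hc Z
  have hquad : (c ⬝ᵥ Z) ^ 2 < 2 + c ⬝ᵥ Z := by linarith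
  have hlower : -1 < c ⬝ᵥ Z := by nlinarith
  have hupper : c ⬝ᵥ Z < 2 := by nlinarith
  have hKZ : c ⬝ᵥ Z = 0 ∨ c ⬝ᵥ Z = 1 := by omega
  have hneg : Z ⬝ᵥ (M *ᵥ Z) + c ⬝ᵥ Z < 0 := by
    rcases hKZ with h | h <;> rw [h] at hlt ⊢ <;> linarith
  exact ⟨by omega, hKZ⟩

namespace ResolutionDatum

variable {r : ℕ} (D : ResolutionDatum r)

theorem posDef_neg_map_intCast : (-D.M.map (Int.cast : ℤ → ℚ)).PosDef := by
  refine .of_dotProduct_mulVec_pos (isHermitian_iff_isSymm.mpr (D.symm.map _).neg) fun x hx ↦ ?_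
  have hneg := D.negdef (fun i ↦ (x i : ℝ)) fun h ↦ hx <| funext fun i ↦ by
    simpa using congrFun h i
  rw [star_trivial, neg_mulVec, dotProduct_neg, neg_pos]
  simp only [dotProduct, mulVec, Matrix.map_apply] at hneg ⊢
  exact_mod_cast hneg

theorem even_diag_add_cInt (i : Fin r) : Even (D.M i i + D.cInt i) :=
  ⟨D.p i - 1, by simp only [cInt]; ring⟩

theorem intCast_comp_cInt : Int.cast ∘ D.cInt = D.c := by
  ext i
  simp [c, cInt]

end ResolutionDatum

/-- **Key claim in the proof of Proposition 2.8.** If `-K² < 1` and `Z` is a nonzero effective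
cycle of nonnegative arithmetic genus (e.g. the fundamental cycle), then
`Z² + K·Z = -2` and `K·Z ∈ {0, 1}`. -/
theorem fundamental_cycle_of_negK2_lt_one (r : ℕ) (hr : 0 < r) (D : ResolutionDatum r)
    (hK : D.negK2 < 1)
    (Z : Fin r → ℤ) (hZne : Z ≠ 0) (hZnonneg : ∀ i, 0 ≤ Z i)
    (hpa : 0 ≤ 2 + Z ⬝ᵥ (D.M *ᵥ Z) + D.cInt ⬝ᵥ Z) :
    Z ⬝ᵥ (D.M *ᵥ Z) + D.cInt ⬝ᵥ Z = -2 ∧ (D.cInt ⬝ᵥ Z = 0 ∨ D.cInt ⬝ᵥ Z = 1) :=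
  fundamental_cycle_of_negK2_lt_one_general D.posDef_neg_map_intCast D.even_diag_add_cInt
    (by rwa [D.intCast_comp_cInt]) hZne hpa
end
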